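/- arXiv:1406.0373 — 6 statements merged into one kernel-verified Lean document; each statement's English description precedes it below -/
import Mathlib

section
/- Let 2 ≤ r ≤ k, q ≥ 2, 1 ≤ l ≤ k−1, and let f_1,…,f_m : [q]^k → [q]^l be (r−1)-wise independent local functions with neighborhoods ∂(a) ⊆ {1,…,n} of size k. Let x* ∈ [q]^n and set y_a = f_a(x*|_{∂(a)}) for every a. If V' ⊆ {u+1,…,n} is a (k−r+2)-stopping set, then there exists a zero-optimal point of the local marginal polytope LOCAL (for the targets (y_a)) satisfying b_i(x*_i) = 1 for all i ∉ V' whose integral part equals {1,…,n} \ V'. Explicitly, one may take b_i uniform on [q] for i ∈ V', b_i(x*_i) = 1 for i ∉ V', and b_{(a)} uniform on the set of x^(a) ∈ f_a^{−1}(y_a) that agree with x* on ∂(a) \ V'. -/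
open Filter Finset Asymptotics

noncomputable section

/-- Neighborhood `∂(a)` of constraint `a` in the bipartite graph given by `ω`. -/
def nbhd {n m k : ℕ} (ω : Fin m → (Fin k ↪ Fin n)) (a : Fin m) : Finset (Fin n) :=
  Finset.univ.image (ω a)

/-- `V` is a `d`-stopping set: every constraint meets `V` in `0` or at least `d` variables. -/
def IsStoppingSet {n m k : ℕ} (d : ℕ) (ω : Fin m → (Fin k ↪ Fin n))
    (V : Finset (Fin n)) : Prop :=
  ∀ a : Fin m, (nbhd ω a ∩ V).card = 0 ∨ d ≤ (nbhd ω a ∩ V).card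

/-- Probability of an event under the uniform random bipartite-graph ensemble:
each of the `m` constraints independently picks a uniformly random `k`-tuple of
distinct indices from `{1,…,n}` (an embedding `Fin k ↪ Fin n`). -/
def prG (n m k : ℕ) (P : (Fin m → (Fin k ↪ Fin n)) → Prop) : ℝ :=
  letI := Classical.decPred P
  ((Finset.univ.filter P).card : ℝ) / (Fintype.card (Fin m → (Fin k ↪ Fin n)) : ℝ)

/-- `u ∈ ω(1) ∩ o(n)`. -/
def UGood (u : ℕ → ℕ) : Prop :=
  Tendsto (fun n => (u n : ℝ)) atTop atTop ∧
    Tendsto (fun n => (u n : ℝ) / (n : ℝ)) atTop (nhds 0)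

/-- `μ_c(k,r) = binom(k,r)⁻¹ (r-2)^(r-2) / (r (r-1)^(r-1))`. -/
def muc (k r : ℕ) : ℝ :=
  ((k.choose r : ℝ))⁻¹ * (((r : ℝ) - 2) ^ (r - 2) / ((r : ℝ) * ((r : ℝ) - 1) ^ (r - 1)))

/-- `φ_{k,r}(μ,λ,τ) = μ (e^{(k-r+1)λ} - 1) binom(k,r-1) (1+τ)^{r-1} - λτ`. -/
def phiE (k r : ℕ) (μ lam τ : ℝ) : ℝ :=
  μ * (Real.exp (((k : ℝ) - (r : ℝ) + 1) * lam) - 1) * (k.choose (r - 1) : ℝ)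
      * (1 + τ) ^ (r - 1)
    - lam * τ

/-- Membership in the local marginal polytope LOCAL: each `B a` is a distribution on
`[q]^k`, each `b i` is a distribution on `[q]`, and the marginalization conditions hold. -/
def MemLOCAL {n m q k : ℕ} (nb : Fin m → (Fin k ↪ Fin n))
    (b : Fin n → Fin q → ℝ) (B : Fin m → (Fin k → Fin q) → ℝ) : Prop :=
  (∀ i x, 0 ≤ b i x) ∧ (∀ i, ∑ x, b i x = 1) ∧
  (∀ a z, 0 ≤ B a z) ∧ (∀ a, ∑ z, B a z = 1) ∧
  (∀ (a : Fin m) (j : Fin k) (x : Fin q),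
    b (nb a j) x = ∑ z : Fin k → Fin q, if z j = x then B a z else 0)

/-- A point of LOCAL is zero-optimal if each `B a` is supported on `f_a⁻¹(y_a)`. -/
def ZeroOptimal {m q k l : ℕ} (f : Fin m → (Fin k → Fin q) → (Fin l → Fin q))
    (y : Fin m → Fin l → Fin q) (B : Fin m → (Fin k → Fin q) → ℝ) : Prop :=
  ∀ a z, B a z ≠ 0 → f a z = y a

/-- Integral part of a point of LOCAL. -/
def integralPart {n q : ℕ} (b : Fin n → Fin q → ℝ) : Finset (Fin n) :=
  letI := Classical.decPred fun i : Fin n => ∃ x : Fin q, b i x = 1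
  Finset.univ.filter fun i : Fin n => ∃ x : Fin q, b i x = 1

/-- `f : [q]^k → [q]^l` is `w`-wise independent. -/
def WiseIndep (q k l w : ℕ) (f : (Fin k → Fin q) → (Fin l → Fin q)) : Prop :=
  ∀ T : Finset (Fin k), T.card ≤ w → ∀ xT : Fin k → Fin q, ∀ y : Fin l → Fin q,
    (Finset.univ.filter fun x : Fin k → Fin q =>
        (∀ i ∈ T, x i = xT i) ∧ f x = y).card
      = q ^ (k - T.card - l)

/-- Minimum Hamming distance of a code. -/
def minHammingDist {A : Type*} [DecidableEq A] {k : ℕ} (M : Finset (Fin k → A)) : ℕ :=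
  sInf {d | ∃ x ∈ M, ∃ y ∈ M, x ≠ y ∧ hammingDist x y = d}

/-- `M` is an MDS code of length `k` and dimension `r-1`. -/
def IsMDSCode (A : Type*) [Fintype A] [DecidableEq A] (k r : ℕ)
    (M : Finset (Fin k → A)) : Prop :=
  M.card = Fintype.card A ^ (r - 1) ∧ minHammingDist M = k - r + 2

/-- `f` has MDS inverse image of dimension `r-1`. -/
def HasMDSInv (q k r : ℕ) (f : (Fin k → Fin q) → (Fin (k - r + 1) → Fin q)) : Prop :=
  ∀ y : Fin (k - r + 1) → Fin q,
    IsMDSCode (Fin q) k r (Finset.univ.filter fun x => f x = y)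

instance {n m k : ℕ} (d : ℕ) (ω : Fin m → (Fin k ↪ Fin n)) :
    DecidablePred fun V : Finset (Fin n) => IsStoppingSet d ω V := fun V => by
  unfold IsStoppingSet; infer_instance

/-! Fix a constraint `a` and a variable `j ∈ ∂(a) ∩ V'`. The stopping condition leaves at most
`r - 2` variables of `a` outside `V'`, so prescribing these together with `j` prescribes at most
`r - 1` coordinates. By `(r-1)`-wise independence the number of assignments in `f_a⁻¹(y_a)` with the
prescribed values does not depend on the value at `j`; hence the uniform distribution on the
compatible part of the fiber has uniform marginal at `j`. -/

section UniformDensity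

variable {α β : Type*} [DecidableEq α]

/-- The probability mass function of the uniform distribution on the finite set `s`, with real
values as in `MemLOCAL`. For `s = ∅` it is the zero function. -/
def uniformDensity (s : Finset α) (z : α) : ℝ :=
  if z ∈ s then 1 / (#s : ℝ) else 0

lemma uniformDensity_nonneg (s : Finset α) (z : α) : 0 ≤ uniformDensity s z := by
  unfold uniformDensity
  positivity

lemma mem_of_uniformDensity_ne_zero {s : Finset α} {z : α} (hz : uniformDensity s z ≠ 0) :
    z ∈ s := by
  by_contra hzs
  exact hz (if_neg hzs)

variable [Fintype α] {s : Finset α}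

lemma sum_uniformDensity (hs : s.Nonempty) : ∑ z, uniformDensity s z = 1 := by
  have hs_card : (#s : ℝ) ≠ 0 := by exact_mod_cast hs.card_ne_zero
  simp [uniformDensity, hs_card]

variable [DecidableEq β]

lemma marginal_uniformDensity (s : Finset α) (g : α → β) (c : β) :
    (∑ z, if g z = c then uniformDensity s z else 0) = (#{z ∈ s | g z = c} : ℝ) / #s := by
  calc (∑ z, if g z = c then uniformDensity s z else 0)
      = ∑ z, if z ∈ s.filter (g · = c) then 1 / (#s : ℝ) else 0 := by
        simp only [uniformDensity, mem_filter, and_comm, ite_and]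
    _ = (#{z ∈ s | g z = c} : ℝ) / #s := by
        rw [sum_ite_mem, univ_inter, sum_const, nsmul_eq_mul, mul_one_div]

lemma marginal_uniformDensity_of_eq_const (hs : s.Nonempty) {g : α → β} {c₀ : β}
    (hg : ∀ z ∈ s, g z = c₀) (c : β) :
    (∑ z, if g z = c then uniformDensity s z else 0) = if c = c₀ then 1 else 0 := by
  have hs_card : (#s : ℝ) ≠ 0 := by exact_mod_cast hs.card_ne_zero
  rw [marginal_uniformDensity]
  split_ifs with hc
  · rw [filter_true_of_mem fun z hz => (hg z hz).trans hc.symm, div_self hs_card]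
  · rw [filter_false_of_mem fun z hz hzc => hc (hzc.symm.trans (hg z hz)), card_empty,
      Nat.cast_zero, zero_div]

lemma marginal_uniformDensity_of_card_fiber_eq [Fintype β] (hs : s.Nonempty) {g : α → β} {N : ℕ}
    (hg : ∀ c, #{z ∈ s | g z = c} = N) (c : β) :
    (∑ z, if g z = c then uniformDensity s z else 0) = 1 / (Fintype.card β : ℝ) := by
  have hs_card : #s = Fintype.card β * N := by
    rw [card_eq_sum_card_fiberwise (f := g) (t := univ) (fun _ _ => mem_coe.2 (mem_univ _)),
      sum_const_nat fun c _ => hg c, card_univ]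
  have hN : (N : ℝ) ≠ 0 := by
    exact_mod_cast right_ne_zero_of_mul (hs_card ▸ hs.card_ne_zero)
  rw [marginal_uniformDensity, hg, hs_card, Nat.cast_mul, div_mul_cancel_right₀ hN, one_div]

end UniformDensity

section CompatibleFiber

variable {k : ℕ} {ι α β : Type*} [DecidableEq ι] [Fintype α] [DecidableEq α] [DecidableEq β]

/-- The part of the fiber of a local function `g` through the global assignment `x` that agrees with
`x` off `V`; here `e` lists the variables that `g` reads. It supports the belief of a constraint. -/
def compatibleFiber (e : Fin k → ι) (g : (Fin k → α) → β) (x : ι → α) (V : Finset ι) :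
    Finset (Fin k → α) :=
  {z | (g z = g fun j => x (e j)) ∧ ∀ j, e j ∉ V → z j = x (e j)}

lemma compatibleFiber_nonempty (e : Fin k → ι) (g : (Fin k → α) → β) (x : ι → α) (V : Finset ι) :
    (compatibleFiber e g x V).Nonempty :=
  ⟨fun j => x (e j), by simp [compatibleFiber]⟩

variable {e : Fin k → ι} {g : (Fin k → α) → β} {x : ι → α} {V : Finset ι} {z : Fin k → α}
  {j : Fin k}

lemma eq_of_mem_compatibleFiber (hz : z ∈ compatibleFiber e g x V) : g z = g fun j => x (e j) :=
  (mem_filter.1 hz).2.1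

lemma apply_eq_of_mem_compatibleFiber (hz : z ∈ compatibleFiber e g x V) (hj : e j ∉ V) :
    z j = x (e j) :=
  (mem_filter.1 hz).2.2 j hj

lemma filter_compatibleFiber_apply_eq (hj : e j ∈ V) (c : α) :
    {z ∈ compatibleFiber e g x V | z j = c} =
      ({z | (∀ t ∈ insert j ({t | e t ∉ V} : Finset (Fin k)),
        z t = Function.update (fun t => x (e t)) j c t) ∧ g z = g fun t => x (e t)} :
        Finset (Fin k → α)) := by
  have agree_off_iff (z : Fin k → α) :
      (∀ t, e t ∉ V → z t = Function.update (fun t => x (e t)) j c t) ↔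
        ∀ t, e t ∉ V → z t = x (e t) :=
    forall₂_congr fun t ht => by rw [Function.update_of_ne (by rintro rfl; exact ht hj)]
  ext z
  simp only [compatibleFiber, mem_filter, mem_univ, true_and, forall_mem_insert,
    Function.update_self, agree_off_iff]
  tauto

end CompatibleFiber

lemma WiseIndep.card_filter_compatibleFiber {ι : Type*} [DecidableEq ι] {q k l w : ℕ}
    {g : (Fin k → Fin q) → (Fin l → Fin q)} (hg : WiseIndep q k l w g) (e : Fin k → ι)
    (x : ι → Fin q) {V : Finset ι} (hV : #{t | e t ∉ V} < w) {j : Fin k} (hj : e j ∈ V)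
    (c : Fin q) :
    #{z ∈ compatibleFiber e g x V | z j = c} = q ^ (k - (#{t | e t ∉ V} + 1) - l) := by
  have hjV : j ∉ ({t | e t ∉ V} : Finset (Fin k)) := by simpa using hj
  rw [filter_compatibleFiber_apply_eq hj, hg _ (by rwa [card_insert_of_notMem hjV]),
    card_insert_of_notMem hjV]

section PlantedPoint

variable {n m q k l : ℕ} {nb : Fin m → (Fin k ↪ Fin n)} {V : Finset (Fin n)}

lemma card_nbhd_inter (nb : Fin m → (Fin k ↪ Fin n)) (a : Fin m) (V : Finset (Fin n)) :
    #(nbhd nb a ∩ V) = #{j | nb a j ∈ V} := by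
  rw [← filter_mem_eq_inter, nbhd, filter_image, card_image_of_injective _ (nb a).injective]

lemma IsStoppingSet.add_card_notMem_le {d : ℕ} (hV : IsStoppingSet d nb V) {a : Fin m} {j : Fin k}
    (hj : nb a j ∈ V) : d + #{t | nb a t ∉ V} ≤ k := by
  have hpos : #(nbhd nb a ∩ V) ≠ 0 :=
    card_ne_zero_of_mem (mem_inter.2 ⟨mem_image_of_mem _ (mem_univ j), hj⟩)
  calc d + #{t | nb a t ∉ V}
      ≤ #{t | nb a t ∈ V} + #{t | nb a t ∉ V} := by
        gcongr
        exact card_nbhd_inter nb a V ▸ (hV a).resolve_left hpos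
    _ = k := by rw [card_filter_add_card_filter_not, card_univ, Fintype.card_fin]

/-- The belief of each variable: uniform on `[q]` for the variables in `V`, and concentrated on the
value under the planted assignment `x` for the others. -/
def plantedBelief (x : Fin n → Fin q) (V : Finset (Fin n)) (i : Fin n) (c : Fin q) : ℝ :=
  if i ∈ V then 1 / (q : ℝ) else if c = x i then 1 else 0

lemma plantedBelief_nonneg (x : Fin n → Fin q) (V : Finset (Fin n)) (i : Fin n) (c : Fin q) :
    0 ≤ plantedBelief x V i c := by
  unfold plantedBelief
  positivity

lemma sum_plantedBelief (x : Fin n → Fin q) (V : Finset (Fin n)) (i : Fin n) :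
    ∑ c, plantedBelief x V i c = 1 := by
  have hq : (q : ℝ) ≠ 0 := by exact_mod_cast (x i).pos.ne'
  by_cases hi : i ∈ V <;> simp [plantedBelief, hi, hq]

lemma plantedBelief_self (x : Fin n → Fin q) {i : Fin n} (hi : i ∉ V) :
    plantedBelief x V i (x i) = 1 := by
  simp [plantedBelief, hi]

lemma integralPart_plantedBelief (hq : q ≠ 1) (x : Fin n → Fin q) (V : Finset (Fin n)) :
    integralPart (plantedBelief x V) = univ \ V := by
  ext i
  simp only [integralPart, mem_filter, mem_univ, true_and, Finset.mem_sdiff]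
  refine ⟨?_, fun hi => ⟨x i, plantedBelief_self x hi⟩⟩
  rintro ⟨c, hc⟩ hi
  exact hq (by simpa [plantedBelief, hi] using hc)

/-- The belief of each constraint: uniform on the assignments of its variables that produce the
planted output and agree with `x` off `V`. -/
def plantedConstraintBelief (nb : Fin m → (Fin k ↪ Fin n))
    (f : Fin m → (Fin k → Fin q) → (Fin l → Fin q)) (x : Fin n → Fin q) (V : Finset (Fin n))
    (a : Fin m) : (Fin k → Fin q) → ℝ :=
  uniformDensity (compatibleFiber (nb a) (f a) x V)

variable {f : Fin m → (Fin k → Fin q) → (Fin l → Fin q)}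

lemma plantedBelief_eq_marginal {d w : ℕ} (hdw : k < d + w) (hV : IsStoppingSet d nb V)
    {a : Fin m} (hf : WiseIndep q k l w (f a)) (x : Fin n → Fin q) (j : Fin k) (c : Fin q) :
    plantedBelief x V (nb a j) c =
      ∑ z : Fin k → Fin q, if z j = c then plantedConstraintBelief nb f x V a z else 0 := by
  have hne := compatibleFiber_nonempty (nb a) (f a) x V
  by_cases hj : nb a j ∈ V
  · have hfew : #{t | nb a t ∉ V} < w := by
      have := hV.add_card_notMem_le hj
      lia
    rw [plantedBelief, if_pos hj, plantedConstraintBelief,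
      marginal_uniformDensity_of_card_fiber_eq hne
        (hf.card_filter_compatibleFiber (nb a) x hfew hj), Fintype.card_fin]
  · rw [plantedBelief, if_neg hj, plantedConstraintBelief,
      marginal_uniformDensity_of_eq_const hne fun z hz => apply_eq_of_mem_compatibleFiber hz hj]

lemma memLOCAL_planted {d w : ℕ} (hdw : k < d + w) (hV : IsStoppingSet d nb V)
    (hf : ∀ a, WiseIndep q k l w (f a)) (x : Fin n → Fin q) :
    MemLOCAL nb (plantedBelief x V) (plantedConstraintBelief nb f x V) :=
  ⟨plantedBelief_nonneg x V, sum_plantedBelief x V, fun _ => uniformDensity_nonneg _,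
    fun a => sum_uniformDensity (compatibleFiber_nonempty (nb a) (f a) x V),
    fun a => plantedBelief_eq_marginal hdw hV (hf a) x⟩

lemma zeroOptimal_planted (nb : Fin m → (Fin k ↪ Fin n))
    (f : Fin m → (Fin k → Fin q) → (Fin l → Fin q)) (x : Fin n → Fin q) (V : Finset (Fin n)) :
    ZeroOptimal f (fun a => f a fun j => x (nb a j)) (plantedConstraintBelief nb f x V) :=
  fun _ _ hz => eq_of_mem_compatibleFiber (mem_of_uniformDensity_ne_zero hz)

end PlantedPoint

/-- Lemma `lem:sslp`: if all local functions are `(r-1)`-wise independent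
and `V' ⊆ {u+1,…,n}` is a `(k-r+2)`-stopping set, then the explicit family
(`b_i` uniform on `V'`, `b_i = δ_{x*_i}` off `V'`, and `B_a` uniform on the compatible part
of the fiber `f_a⁻¹(y_a)`) is a zero-optimal point of LOCAL with `b_i(x*_i) = 1` for
`i ∉ V'` and integral part `{1,…,n} \ V'`. -/
theorem stmt2 (n m q k l r u : ℕ) (hr2 : 2 ≤ r) (hrk : r ≤ k) (hq : 2 ≤ q)
    (hl1 : 1 ≤ l) (hlk : l ≤ k - 1)
    (nb : Fin m → (Fin k ↪ Fin n))
    (f : Fin m → (Fin k → Fin q) → (Fin l → Fin q))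
    (hf : ∀ a, WiseIndep q k l (r - 1) (f a))
    (xs : Fin n → Fin q)
    (V : Finset (Fin n)) (hV : ∀ i ∈ V, u ≤ (i : ℕ))
    (hss : IsStoppingSet (k - r + 2) nb V) :
    let y : Fin m → Fin l → Fin q := fun a => f a fun j => xs (nb a j)
    let b : Fin n → Fin q → ℝ := fun i x =>
      if i ∈ V then 1 / (q : ℝ) else if x = xs i then 1 else 0
    let S : Fin m → Finset (Fin k → Fin q) := fun a =>
      Finset.univ.filter fun z : Fin k → Fin q =>
        f a z = y a ∧ ∀ j : Fin k, nb a j ∉ V → z j = xs (nb a j)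
    let B : Fin m → (Fin k → Fin q) → ℝ := fun a z =>
      if z ∈ S a then 1 / ((S a).card : ℝ) else 0
    MemLOCAL nb b B ∧ ZeroOptimal f y B ∧ (∀ i ∉ V, b i (xs i) = 1) ∧
      integralPart b = Finset.univ \ V := by
  intro y b S B
  exact ⟨memLOCAL_planted (by lia) hss hf xs, zeroOptimal_planted nb f xs V,
    fun _ => plantedBelief_self xs, integralPart_plantedBelief (by lia) xs V⟩
end
end

section
/- Let 2 ≤ r ≤ k and q ≥ 2, and let f_1,…,f_m : [q]^k → [q]^{k−r+1} be local functions with neighborhoods ∂(a) ⊆ {1,…,n} of size k, all having MDS inverse image of dimension r−1, with target outputs y_a ∈ [q]^{k−r+1}. If a point of the local marginal polytope LOCAL is zero-optimal and its integral part is V'' ⊆ {1,…,n}, then the complement {1,…,n} \ V'' is a (k−r+2)-stopping set. -/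
open Filter Finset Asymptotics

noncomputable section

/-! A variable `i ∈ ∂(a)` is integral exactly when all words in the support of `b_{(a)}` agree at
`i`. Zero-optimality puts this support inside the fibre `f_a⁻¹(y_a)`, a code of minimum distance
`k - r + 2`. Either the support is a single word and every variable of `∂(a)` is integral, or it
contains two distinct words, and the at least `k - r + 2` positions where these differ are not
integral. -/

section VaryingCoords

variable {ι A : Type*} [Fintype ι]

open Classical in
/-- The coordinates that are not constant on the code `S`, i.e. those at which some two words of
`S` differ. For `S` the support of `b_{(a)}` they are the positions in `∂(a)` of the non-integral
variables. -/
def varyingCoords (S : Set (ι → A)) : Finset ι :=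
  {j | ∃ x ∈ S, ∃ y ∈ S, x j ≠ y j}

theorem mem_varyingCoords {S : Set (ι → A)} {j : ι} :
    j ∈ varyingCoords S ↔ ∃ x ∈ S, ∃ y ∈ S, x j ≠ y j := by
  simp [varyingCoords]

theorem notMem_varyingCoords_iff_exists {S : Set (ι → A)} (hS : S.Nonempty) {j : ι} :
    j ∉ varyingCoords S ↔ ∃ c, ∀ x ∈ S, x j = c := by
  rw [mem_varyingCoords]
  push Not
  constructor
  · obtain ⟨x₀, hx₀⟩ := hS
    exact fun h => ⟨x₀ j, fun x hx => h x hx x₀ hx₀⟩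
  · rintro ⟨c, hc⟩ x hx y hy
    rw [hc x hx, hc y hy]

theorem varyingCoords_eq_empty {S : Set (ι → A)} (hS : S.Subsingleton) :
    varyingCoords S = ∅ := by
  refine Finset.eq_empty_of_forall_notMem fun j hj => ?_
  obtain ⟨x, hx, y, hy, hxy⟩ := mem_varyingCoords.1 hj
  exact hxy (congrFun (hS hx hy) j)

variable [DecidableEq A]

theorem hammingDist_le_card_varyingCoords {S : Set (ι → A)} {x y : ι → A} (hx : x ∈ S)
    (hy : y ∈ S) : hammingDist x y ≤ (varyingCoords S).card :=
  Finset.card_le_card fun _ hj =>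
    mem_varyingCoords.2 ⟨x, hx, y, hy, (Finset.mem_filter.1 hj).2⟩

theorem card_varyingCoords_eq_zero_or_le {d : ℕ} {S : Set (ι → A)}
    (hS : S.Pairwise fun x y => d ≤ hammingDist x y) :
    (varyingCoords S).card = 0 ∨ d ≤ (varyingCoords S).card := by
  rcases S.subsingleton_or_nontrivial with hsub | ⟨x, hx, y, hy, hxy⟩
  · exact .inl (Finset.card_eq_zero.2 (varyingCoords_eq_empty hsub))
  · exact .inr ((hS hx hy hxy).trans (hammingDist_le_card_varyingCoords hx hy))

end VaryingCoords

theorem pairwise_minHammingDist_le {A : Type*} [DecidableEq A] {k : ℕ} (M : Finset (Fin k → A)) :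
    (M : Set (Fin k → A)).Pairwise fun x y => minHammingDist M ≤ hammingDist x y :=
  fun x hx y hy hxy => Nat.sInf_le ⟨x, hx, y, hy, hxy, rfl⟩

theorem HasMDSInv.pairwise_le_hammingDist {q k r : ℕ}
    {f : (Fin k → Fin q) → (Fin (k - r + 1) → Fin q)} (hf : HasMDSInv q k r f)
    (y : Fin (k - r + 1) → Fin q) :
    (f ⁻¹' {y}).Pairwise fun x x' => k - r + 2 ≤ hammingDist x x' := by
  have h := pairwise_minHammingDist_le {x | f x = y}
  rwa [(hf y).2, Finset.coe_filter_univ] at h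

theorem sum_ite_eq_sum_iff_support_subset {ι M : Type*} [Fintype ι] [AddCommMonoid M]
    [PartialOrder M] [IsOrderedCancelAddMonoid M] {p : ι → M} (hp : ∀ i, 0 ≤ p i)
    (P : ι → Prop) [DecidablePred P] :
    ∑ i, (if P i then p i else 0) = ∑ i, p i ↔ p.support ⊆ {i | P i} := by
  have hle : ∀ i ∈ univ, (if P i then p i else 0) ≤ p i := fun i _ => by
    split_ifs
    exacts [le_rfl, hp i]
  rw [Finset.sum_eq_sum_iff_of_le hle]
  refine ⟨fun h i hi => ?_, fun h i _ => ?_⟩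
  · by_contra hPi
    exact hi ((h i (mem_univ i)).symm.trans (if_neg hPi))
  · rw [ite_eq_left_iff]
    exact fun hPi => (Function.notMem_support.1 fun hi => hPi (h hi)).symm

theorem mem_integralPart {n q : ℕ} {b : Fin n → Fin q → ℝ} {i : Fin n} :
    i ∈ integralPart b ↔ ∃ x, b i x = 1 := by
  simp [integralPart]

namespace MemLOCAL

variable {n m q k : ℕ} {nb : Fin m → (Fin k ↪ Fin n)} {b : Fin n → Fin q → ℝ}
  {B : Fin m → (Fin k → Fin q) → ℝ}

theorem support_nonempty (h : MemLOCAL nb b B) (a : Fin m) : (B a).support.Nonempty := by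
  obtain ⟨-, -, -, hsum, -⟩ := h
  rw [Function.support_nonempty_iff]
  intro hzero
  simpa [hzero] using hsum a

theorem marginal_eq_one_iff (h : MemLOCAL nb b B) (a : Fin m) (j : Fin k) (x : Fin q) :
    b (nb a j) x = 1 ↔ (B a).support ⊆ {z | z j = x} := by
  obtain ⟨-, -, hnonneg, hsum, hmarginal⟩ := h
  rw [hmarginal, ← hsum a, sum_ite_eq_sum_iff_support_subset (hnonneg a)]

theorem mem_integralPart_iff (h : MemLOCAL nb b B) (a : Fin m) (j : Fin k) :
    nb a j ∈ integralPart b ↔ j ∉ varyingCoords (B a).support := by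
  simp only [mem_integralPart, h.marginal_eq_one_iff,
    notMem_varyingCoords_iff_exists (h.support_nonempty a), Set.subset_def, Set.mem_ofPred_eq]

theorem nbhd_inter_sdiff_integralPart (h : MemLOCAL nb b B) (a : Fin m) :
    nbhd nb a ∩ (univ \ integralPart b) = (varyingCoords (B a).support).map (nb a) := by
  ext i
  simp only [nbhd, Finset.mem_inter, Finset.mem_image, Finset.mem_sdiff, Finset.mem_univ, true_and,
    Finset.mem_map]
  constructor
  · rintro ⟨⟨j, rfl⟩, hj⟩
    exact ⟨j, not_not.1 (mt (h.mem_integralPart_iff a j).2 hj), rfl⟩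
  · rintro ⟨j, hj, rfl⟩
    exact ⟨⟨j, rfl⟩, fun hint => (h.mem_integralPart_iff a j).1 hint hj⟩

end MemLOCAL

theorem stmt3_general {n m q k l d : ℕ} {nb : Fin m → (Fin k ↪ Fin n)}
    {f : Fin m → (Fin k → Fin q) → (Fin l → Fin q)} {y : Fin m → Fin l → Fin q}
    (hf : ∀ a, (f a ⁻¹' {y a}).Pairwise fun x x' => d ≤ hammingDist x x')
    {b : Fin n → Fin q → ℝ} {B : Fin m → (Fin k → Fin q) → ℝ}
    (hmem : MemLOCAL nb b B) (hzero : ZeroOptimal f y B) :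
    IsStoppingSet d nb (Finset.univ \ integralPart b) := by
  intro a
  have hsupport : (B a).support ⊆ f a ⁻¹' {y a} := hzero a
  rw [hmem.nbhd_inter_sdiff_integralPart, card_map]
  exact card_varyingCoords_eq_zero_or_le ((hf a).mono hsupport)

/-- Lemma `lem:lpss`: if all local functions have MDS inverse image of
dimension `r-1` and a point of LOCAL is zero-optimal with integral part `V''`, then
`{1,…,n} \ V''` is a `(k-r+2)`-stopping set. -/
theorem stmt3 (n m q k r : ℕ) (hr2 : 2 ≤ r) (hrk : r ≤ k) (hq : 2 ≤ q)
    (nb : Fin m → (Fin k ↪ Fin n))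
    (f : Fin m → (Fin k → Fin q) → (Fin (k - r + 1) → Fin q))
    (hf : ∀ a, HasMDSInv q k r (f a))
    (y : Fin m → Fin (k - r + 1) → Fin q)
    (b : Fin n → Fin q → ℝ) (B : Fin m → (Fin k → Fin q) → ℝ)
    (hmem : MemLOCAL nb b B) (hzero : ZeroOptimal f y B) :
    IsStoppingSet (k - r + 2) nb (Finset.univ \ integralPart b) :=
  stmt3_general (fun a => (hf a).pairwise_le_hammingDist (y a)) hmem hzero
end
end

section
/- Let q ≥ 2, k ≥ 2, 1 ≤ l ≤ k−1, and let f_1,…,f_m : [q]^k → [q]^l be local functions with neighborhoods ∂(a) ⊆ {1,…,n} of size k, each of which is 1-wise independent. Then for any targets y_a ∈ [q]^l, the family defined by b_i(x) = 1/q for all i ∈ {1,…,n} and x ∈ [q], and b_{(a)}(x^(a)) = 1{f_a(x^(a)) = y_a} / |f_a^{−1}(y_a)| for all a and x^(a) ∈ [q]^k, is a well-defined point of the local marginal polytope LOCAL and is zero-optimal. In particular, the LP relaxation over LOCAL without any fixed variables always admits a zero-objective solution whose integral part is empty. -/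
open Filter Finset Asymptotics

noncomputable section

/-!
If every value of every coordinate is taken equally often on the fiber `f_a⁻¹(y_a)`, then the
uniform distribution on this fiber has uniform one-variable marginals, whatever `a` and `y_a` are.
Hence the uniform distributions on the fibers of different constraints are automatically consistent
with the single choice `b_i = 1/q`, which is nowhere integral as soon as `q ≥ 2`.
-/

section Balanced

variable {Ω α : Type*} [DecidableEq α] {g : Ω → α} {S : Finset Ω}

/-- A finite set `S` is balanced along `g` if `g` takes every value equally often on `S`; for
nonempty `S` this says that `g` maps the uniform distribution on `S` to the uniform distribution.
A set of tuples that is balanced along every coordinate is an orthogonal array of strength one. -/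
def IsBalancedAlong (g : Ω → α) (S : Finset Ω) : Prop :=
  ∀ x x' : α, #{z ∈ S | g z = x} = #{z ∈ S | g z = x'}

theorem IsBalancedAlong.card_mul_card_fiber [Fintype α] (hg : IsBalancedAlong g S) (x : α) :
    Fintype.card α * #{z ∈ S | g z = x} = #S :=
  calc Fintype.card α * #{z ∈ S | g z = x}
    _ = ∑ x' : α, #{z ∈ S | g z = x'} := by
      rw [sum_congr rfl fun x' _ => hg x' x, sum_const, card_univ, smul_eq_mul]
    _ = #S := (card_eq_sum_card_fiberwise fun _ _ => mem_univ _).symm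

end Balanced

section UniformMass

variable {Ω : Type*} [DecidableEq Ω] {S : Finset Ω}

/-- Probability mass function of the uniform distribution on a finite set `S`, as a real weight.
It is identically zero for `S = ∅`. -/
def uniformMass (S : Finset Ω) (z : Ω) : ℝ :=
  if z ∈ S then 1 / (#S : ℝ) else 0

theorem uniformMass_nonneg (S : Finset Ω) (z : Ω) : 0 ≤ uniformMass S z := by
  unfold uniformMass
  positivity

theorem mem_of_uniformMass_ne_zero {z : Ω} (h : uniformMass S z ≠ 0) : z ∈ S := by
  by_contra hz
  exact h (if_neg hz)

theorem sum_uniformMass (S t : Finset Ω) :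
    ∑ z ∈ t, uniformMass S z = (#(t ∩ S) : ℝ) / (#S : ℝ) := by
  simp only [uniformMass, sum_ite_mem, sum_const, nsmul_eq_mul, mul_one_div]

theorem sum_univ_uniformMass [Fintype Ω] (hS : S.Nonempty) : ∑ z, uniformMass S z = 1 := by
  rw [sum_uniformMass, univ_inter, div_self (Nat.cast_ne_zero.mpr hS.card_ne_zero)]

theorem uniformMass_filter_univ [Fintype Ω] (p : Ω → Prop) [DecidablePred p] :
    uniformMass ({z | p z} : Finset Ω) =
      fun z => if p z then 1 / (#{z' | p z'} : ℝ) else 0 := by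
  funext z
  simp only [uniformMass, mem_filter_univ]

theorem IsBalancedAlong.sum_fiber_uniformMass {α : Type*} [Fintype Ω] [Fintype α] [DecidableEq α]
    {g : Ω → α} (hg : IsBalancedAlong g S) (hS : S.Nonempty) (x : α) :
    ∑ z with g z = x, uniformMass S z = 1 / (Fintype.card α : ℝ) := by
  have hcard : (Fintype.card α : ℝ) * (#{z ∈ S | g z = x} : ℝ) = #S :=
    mod_cast hg.card_mul_card_fiber x
  have hS₀ : (#S : ℝ) ≠ 0 := Nat.cast_ne_zero.mpr hS.card_ne_zero
  have hα₀ : (Fintype.card α : ℝ) ≠ 0 := left_ne_zero_of_mul (hcard ▸ hS₀)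
  rw [sum_uniformMass, filter_inter, univ_inter, div_eq_div_iff hS₀ hα₀, one_mul, mul_comm, hcard]

end UniformMass

namespace WiseIndep

variable {q k l w : ℕ} {f : (Fin k → Fin q) → (Fin l → Fin q)}

theorem card_fiber [NeZero q] (hf : WiseIndep q k l w f) (y : Fin l → Fin q) :
    #{z | f z = y} = q ^ (k - l) := by
  simpa using hf ∅ (Nat.zero_le w) 0 y

theorem fiber_nonempty [NeZero q] (hf : WiseIndep q k l w f) (y : Fin l → Fin q) :
    ({z | f z = y} : Finset (Fin k → Fin q)).Nonempty := by
  rw [← card_pos, hf.card_fiber]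
  exact pow_pos (NeZero.pos q) _

theorem isBalancedAlong_fiber (hf : WiseIndep q k l w f) (hw : 1 ≤ w) (j : Fin k)
    (y : Fin l → Fin q) :
    IsBalancedAlong (fun z : Fin k → Fin q => z j) {z | f z = y} := by
  have hcard (x : Fin q) : #{z | f z = y ∧ z j = x} = q ^ (k - 1 - l) := by
    simpa [and_comm] using hf {j} (by simpa using hw) (fun _ => x) y
  intro x x'
  rw [filter_filter, filter_filter, hcard, hcard]

end WiseIndep

section Local

variable {n m q k l : ℕ}

theorem memLOCAL_uniformMass [NeZero q] (nb : Fin m → (Fin k ↪ Fin n))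
    {S : Fin m → Finset (Fin k → Fin q)} (hS : ∀ a, (S a).Nonempty)
    (hbal : ∀ a j, IsBalancedAlong (fun z => z j) (S a)) :
    MemLOCAL nb (fun _ _ => 1 / (q : ℝ)) fun a => uniformMass (S a) := by
  refine ⟨fun _ _ => by positivity, fun _ => ?_, fun a => uniformMass_nonneg (S a),
    fun a => sum_univ_uniformMass (hS a), fun a j x => ?_⟩
  · simp [NeZero.ne q]
  · rw [← sum_filter, (hbal a j).sum_fiber_uniformMass (hS a), Fintype.card_fin]

theorem zeroOptimal_uniformMass {f : Fin m → (Fin k → Fin q) → (Fin l → Fin q)}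
    {y : Fin m → Fin l → Fin q} {S : Fin m → Finset (Fin k → Fin q)}
    (hSf : ∀ a, ∀ z ∈ S a, f a z = y a) :
    ZeroOptimal f y fun a => uniformMass (S a) :=
  fun a z hz => hSf a z (mem_of_uniformMass_ne_zero hz)

theorem integralPart_eq_empty_iff {b : Fin n → Fin q → ℝ} :
    integralPart b = ∅ ↔ ∀ i x, b i x ≠ 1 := by
  simp [integralPart, filter_eq_empty_iff]

theorem stmt6_general (hq : 2 ≤ q) (nb : Fin m → (Fin k ↪ Fin n))
    (f : Fin m → (Fin k → Fin q) → (Fin l → Fin q)) (y : Fin m → Fin l → Fin q)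
    (S : Fin m → Finset (Fin k → Fin q)) (hSf : ∀ a, ∀ z ∈ S a, f a z = y a)
    (hS : ∀ a, (S a).Nonempty) (hbal : ∀ a j, IsBalancedAlong (fun z => z j) (S a)) :
    let b : Fin n → Fin q → ℝ := fun _ _ => 1 / (q : ℝ)
    let B : Fin m → (Fin k → Fin q) → ℝ := fun a => uniformMass (S a)
    MemLOCAL nb b B ∧ ZeroOptimal f y B ∧ integralPart b = ∅ := by
  have : NeZero q := ⟨by lia⟩
  have hq₁ : 1 / (q : ℝ) < 1 := (div_lt_one (by positivity)).mpr (mod_cast hq)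
  exact ⟨memLOCAL_uniformMass nb hS hbal, zeroOptimal_uniformMass hSf,
    integralPart_eq_empty_iff.mpr fun _ _ => hq₁.ne⟩

end Local

/-- for 1-wise independent local functions, the uniform family
(`b_i ≡ 1/q` and `B_a` uniform on the fiber `f_a⁻¹(y_a)`) is a well-defined zero-optimal
point of LOCAL whose integral part is empty. -/
theorem stmt6 (n m q k l : ℕ) (hq : 2 ≤ q) (hk : 2 ≤ k) (hl1 : 1 ≤ l) (hlk : l ≤ k - 1)
    (nb : Fin m → (Fin k ↪ Fin n))
    (f : Fin m → (Fin k → Fin q) → (Fin l → Fin q))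
    (hf : ∀ a, WiseIndep q k l 1 (f a))
    (y : Fin m → Fin l → Fin q) :
    let b : Fin n → Fin q → ℝ := fun _ _ => 1 / (q : ℝ)
    let B : Fin m → (Fin k → Fin q) → ℝ := fun a z =>
      if f a z = y a then
        1 / ((Finset.univ.filter fun z' : Fin k → Fin q => f a z' = y a).card : ℝ)
      else 0
    MemLOCAL nb b B ∧ ZeroOptimal f y B ∧ integralPart b = ∅ := by
  have : NeZero q := ⟨by lia⟩
  simpa only [uniformMass_filter_univ] using
    stmt6_general hq nb f y (fun a => {z | f a z = y a}) (fun _ _ => (mem_filter_univ _).mp)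
      (fun a => (hf a).fiber_nonempty (y a)) fun a j => (hf a).isBalancedAlong_fiber le_rfl j (y a)
end
end

section
/- Fix integers 2 ≤ d ≤ k and reals α ∈ (0,1), μ > 1/k, and ε ∈ (0, μk−1). For the random bipartite graph ensemble with n variables and m = ⌈μ·n·log n⌉ constraints, the probability that there exists a nonempty d-stopping set of size at most αn is O(n^{1−μk+ε}) as n → ∞. In particular, with probability 1 − O(n^{1−μk+ε}) the random bipartite graph has no nonempty d-stopping set of size at most αn. -/
open Filter Finset Asymptotics

noncomputable section

/-!
For `2 ≤ d`, a constraint meeting `V` in exactly one variable prevents `V` from being a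
`d`-stopping set, and for `#V = s` this happens with probability about
`k (s / n) (1 - s / n) ^ (k - 1)`. With `m ≥ μ n log n` independent constraints, `V` is a
stopping set with probability at most about `n ^ (-μ k s (1 - s / n) ^ (k - 1))`.

When `s` is at most a small multiple of `n`, this is at most `a r ^ (s - 1)` with `a` of order
`n ^ (-μ k)` and `n r → 0`, so the union bound gives a series of order `n a`, dominated by the
singletons. When `s` is between two constant fractions of `n`, the probability is at most
`n ^ (-c n)`, which beats the number `2 ^ n` of sets.
-/

section Counting

variable {ι α : Type*} [Fintype ι] [Fintype α]

/-- An embedding whose only value in `V` is taken at `i` is that value together with the embedding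
of the other indices into the complement of `V`; used to count these embeddings. -/
def embeddingMemOnlyAtEquiv [DecidableEq ι] (V : Finset α) (i : ι) :
    {f : ι ↪ α // ∀ j, f j ∈ V ↔ j = i} ≃ V × ({j // j ≠ i} ↪ {x // x ∉ V}) where
  toFun f := (⟨f.1 i, (f.2 i).2 rfl⟩,
    ⟨fun j => ⟨f.1 j, fun h => j.2 ((f.2 j).1 h)⟩,
      fun _ _ h => Subtype.ext (f.1.injective (congrArg Subtype.val h))⟩)
  invFun p := ⟨⟨fun j => if h : j = i then p.1 else p.2 ⟨j, h⟩, by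
      intro a b hab
      have hne (j : {j // j ≠ i}) : (p.1 : α) ≠ p.2 j := fun h => (p.2 j).2 (h ▸ p.1.2)
      by_cases ha : a = i <;> by_cases hb : b = i
      · exact ha.trans hb.symm
      · exact absurd (by simpa [ha, hb] using hab) (hne ⟨b, hb⟩)
      · exact absurd (by simpa [ha, hb] using hab.symm) (hne ⟨a, ha⟩)
      · simpa [ha, hb, Subtype.val_inj] using hab⟩, by
    intro j
    by_cases h : j = i
    · simp [h]
    · simpa [h] using (p.2 ⟨j, h⟩).2⟩
  left_inv f := by
    ext j
    by_cases h : j = i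
    · simp [h]
    · simp only [Function.Embedding.coeFn_mk, dif_neg h]
      rfl
  right_inv p := by
    ext j
    · simp
    · simp [j.2]

theorem card_embedding_mem_iff_eq [DecidableEq ι] [DecidableEq α] (V : Finset α) (i : ι) :
    #{f : ι ↪ α | ∀ j, f j ∈ V ↔ j = i} =
      #V * (Fintype.card α - #V).descFactorial (Fintype.card ι - 1) := by
  rw [← Fintype.card_subtype, Fintype.card_congr (embeddingMemOnlyAtEquiv V i), Fintype.card_prod,
    Fintype.card_embedding_eq, Fintype.card_coe, Fintype.card_subtype_compl, Fintype.card_coe,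
    ← Set.card_ne_eq i]
  rfl

open scoped Classical in
theorem card_embedding_existsUnique_mem (V : Finset α) :
    #{f : ι ↪ α | ∃! i, f i ∈ V} =
      Fintype.card ι * (#V * (Fintype.card α - #V).descFactorial (Fintype.card ι - 1)) := by
  have hunion : ({f : ι ↪ α | ∃! i, f i ∈ V} : Finset (ι ↪ α)) =
      univ.biUnion fun i => {f : ι ↪ α | ∀ j, f j ∈ V ↔ j = i} := by
    ext f
    simp only [mem_filter, mem_univ, true_and, mem_biUnion]
    exact ⟨fun ⟨i, hi, huniq⟩ => ⟨i, fun j => ⟨huniq j, fun h => h ▸ hi⟩⟩,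
      fun ⟨i, h⟩ => ⟨i, (h i).2 rfl, fun j => (h j).1⟩⟩
  rw [hunion, card_biUnion]
  · simp only [card_embedding_mem_iff_eq, sum_const, smul_eq_mul, card_univ]
  · intro i _ i' _ hne
    refine disjoint_filter.2 fun f _ hf hf' => hne ?_
    exact (hf' i).1 ((hf i).2 rfl)

theorem sum_nonempty_pow_card_sub_one_le {r : ℝ} (hr : 0 < r) (hr' : Fintype.card α * r ≤ 1) :
    ∑ V : Finset α with V.Nonempty, r ^ (#V - 1) ≤ 2 * Fintype.card α := by
  classical
  have hpow (V : Finset α) (hV : V.Nonempty) : r * r ^ (#V - 1) = r ^ #V :=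
    mul_pow_sub_one hV.card_ne_zero r
  have hsum : r * ∑ V : Finset α with V.Nonempty, r ^ (#V - 1) = (1 + r) ^ Fintype.card α - 1 := by
    have herase : ({V | V.Nonempty} : Finset (Finset α)) = univ.erase ∅ := by
      ext V
      simp [nonempty_iff_ne_empty]
    rw [mul_sum, sum_congr rfl fun V hV => hpow V (mem_filter.1 hV).2, herase,
      sum_erase_eq_sub (mem_univ _), card_empty, pow_zero, add_comm 1 r,
      ← Fintype.sum_pow_mul_eq_add_pow α r 1]
    simp only [one_pow, mul_one]
  have hexp : Real.exp (Fintype.card α * r) - 1 ≤ 2 * (Fintype.card α * r) := by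
    have hnr : |Fintype.card α * r| = Fintype.card α * r := abs_of_nonneg (by positivity)
    simpa only [hnr] using (le_abs_self _).trans (Real.abs_exp_sub_one_le (hnr.trans_le hr'))
  refine le_of_mul_le_mul_left ?_ hr
  calc r * ∑ V : Finset α with V.Nonempty, r ^ (#V - 1)
      = (1 + r) ^ Fintype.card α - 1 := hsum
    _ ≤ Real.exp (Fintype.card α * r) - 1 := by
        rw [Real.exp_nat_mul, add_comm 1 r]
        gcongr
        exact Real.add_one_le_exp r
    _ ≤ 2 * (Fintype.card α * r) := hexp
    _ = r * (2 * Fintype.card α) := by ring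

end Counting

section Ensemble

variable {n m k d : ℕ}

theorem prG_eq_div (P : (Fin m → (Fin k ↪ Fin n)) → Prop) [DecidablePred P] :
    prG n m k P = #{ω | P ω} / Fintype.card (Fin m → (Fin k ↪ Fin n)) := by
  unfold prG
  congr!

theorem prG_nonneg (P : (Fin m → (Fin k ↪ Fin n)) → Prop) : 0 ≤ prG n m k P := by
  unfold prG
  positivity

theorem prG_mono {P Q : (Fin m → (Fin k ↪ Fin n)) → Prop} (h : ∀ ω, P ω → Q ω) :
    prG n m k P ≤ prG n m k Q := by
  classical
  rw [prG_eq_div, prG_eq_div]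
  gcongr with ω
  exact h ω

theorem prG_exists_mem_le_sum {β : Type*} (s : Finset β)
    (P : β → (Fin m → (Fin k ↪ Fin n)) → Prop) :
    prG n m k (fun ω => ∃ b ∈ s, P b ω) ≤ ∑ b ∈ s, prG n m k (P b) := by
  classical
  simp only [prG_eq_div, ← sum_div]
  gcongr
  have hunion : ({ω | ∃ b ∈ s, P b ω} : Finset (Fin m → (Fin k ↪ Fin n))) =
      s.biUnion fun b => {ω | P b ω} := by
    ext ω
    simp
  rw [hunion]
  exact_mod_cast card_biUnion_le

theorem prG_forall (P : (Fin k ↪ Fin n) → Prop) [DecidablePred P] :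
    prG n m k (fun ω => ∀ a, P (ω a)) = (#{f | P f} / Fintype.card (Fin k ↪ Fin n) : ℝ) ^ m := by
  have hpi : ({ω | ∀ a, P (ω a)} : Finset (Fin m → (Fin k ↪ Fin n))) =
      Fintype.piFinset fun _ => {f | P f} := by
    ext ω
    simp
  rw [prG_eq_div, hpi, Fintype.card_piFinset_const, Fintype.card_fun]
  simp [div_pow]

theorem IsStoppingSet.not_existsUnique_mem (hd : 2 ≤ d) {ω : Fin m → (Fin k ↪ Fin n)}
    {V : Finset (Fin n)} (h : IsStoppingSet d ω V) (a : Fin m) : ¬ ∃! i, ω a i ∈ V := by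
  rintro ⟨i, hi, huniq⟩
  have hinter : nbhd ω a ∩ V = {ω a i} := by
    ext x
    simp only [nbhd, mem_inter, mem_image, mem_univ, true_and, mem_singleton]
    constructor
    · rintro ⟨⟨j, rfl⟩, hj⟩
      rw [huniq j hj]
    · rintro rfl
      exact ⟨⟨i, rfl⟩, hi⟩
  have := h a
  rw [hinter, card_singleton] at this
  omega

open scoped Classical in
/-- The probability that a uniformly random `k`-tuple of distinct indices has exactly one entry
in `V`, with value `0` when `n < k` and there are no such tuples. A constraint with this property
prevents `V` from being a `d`-stopping set, `2 ≤ d`. -/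
def singleHitProb (k : ℕ) (V : Finset (Fin n)) : ℝ :=
  #{f : Fin k ↪ Fin n | ∃! i, f i ∈ V} / Fintype.card (Fin k ↪ Fin n)

theorem singleHitProb_nonneg (V : Finset (Fin n)) : 0 ≤ singleHitProb k V := by
  unfold singleHitProb
  positivity

theorem mul_pow_le_singleHitProb (V : Finset (Fin n)) {x : ℝ} (hx₀ : 0 ≤ x)
    (hx : x * n + #V + k ≤ n) :
    k * (#V / n) * x ^ (k - 1) ≤ singleHitProb k V := by
  rcases k.eq_zero_or_pos with rfl | hk
  · simpa using singleHitProb_nonneg V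
  have hkn : k ≤ n := by
    have : (k : ℝ) ≤ n := by nlinarith [Nat.cast_nonneg (α := ℝ) (#V), Nat.cast_nonneg (α := ℝ) n]
    exact_mod_cast this
  have hn : (0 : ℝ) < n := by exact_mod_cast hk.trans_le hkn
  have hbase : x * n ≤ (n - #V + 1 - (k - 1) : ℕ) := by
    have : n ≤ (n - #V + 1 - (k - 1)) + #V + k := by omega
    have : (n : ℝ) ≤ (n - #V + 1 - (k - 1) : ℕ) + #V + k := by exact_mod_cast this
    linarith
  have hfalling : (x * n) ^ (k - 1) ≤ (n - #V).descFactorial (k - 1) := calc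
    (x * n) ^ (k - 1) ≤ ((n - #V + 1 - (k - 1) : ℕ) : ℝ) ^ (k - 1) := by gcongr
    _ ≤ (n - #V).descFactorial (k - 1) := by exact_mod_cast Nat.pow_sub_le_descFactorial _ _
  have htotal : (n.descFactorial k : ℝ) ≤ (n : ℝ) ^ k := by
    exact_mod_cast Nat.descFactorial_le_pow n k
  have htotal₀ : (0 : ℝ) < n.descFactorial k := by exact_mod_cast Nat.descFactorial_pos.2 hkn
  rw [singleHitProb, card_embedding_existsUnique_mem, Fintype.card_embedding_eq]
  simp only [Fintype.card_fin]
  push_cast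
  calc k * (#V / n) * x ^ (k - 1) = k * (#V * (x * n) ^ (k - 1)) / (n : ℝ) ^ k := by
        rw [← mul_pow_sub_one hk.ne' (n : ℝ), mul_pow]
        field_simp
    _ ≤ k * (#V * (n - #V).descFactorial (k - 1)) / n.descFactorial k := by gcongr

open scoped Classical in
theorem prG_isStoppingSet_le_exp (hd : 2 ≤ d) (V : Finset (Fin n)) :
    prG n m k (fun ω => IsStoppingSet d ω V) ≤ Real.exp (-(m * singleHitProb k V)) := by
  have hcompl : (#{f : Fin k ↪ Fin n | ¬ ∃! i, f i ∈ V} / Fintype.card (Fin k ↪ Fin n) : ℝ) ≤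
      1 - singleHitProb k V := by
    rw [le_sub_iff_add_le', singleHitProb, ← add_div]
    refine div_le_one_of_le₀ ?_ (Nat.cast_nonneg _)
    have hpartition := card_filter_add_card_filter_not (s := (univ : Finset (Fin k ↪ Fin n)))
      fun f => ∃! i, f i ∈ V
    rw [card_univ] at hpartition
    exact_mod_cast hpartition.le
  calc prG n m k (fun ω => IsStoppingSet d ω V)
      ≤ prG n m k (fun ω => ∀ a, ¬ ∃! i, ω a i ∈ V) :=
        prG_mono fun ω (h : IsStoppingSet d ω V) => h.not_existsUnique_mem hd
    _ = (#{f : Fin k ↪ Fin n | ¬ ∃! i, f i ∈ V} / Fintype.card (Fin k ↪ Fin n) : ℝ) ^ m :=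
        prG_forall fun f => ¬ ∃! i, f i ∈ V
    _ ≤ Real.exp (-singleHitProb k V) ^ m :=
        pow_le_pow_left₀ (by positivity) (hcompl.trans (Real.one_sub_le_exp_neg _)) m
    _ = Real.exp (-(m * singleHitProb k V)) := by
        rw [← Real.exp_nat_mul, mul_neg]

theorem prG_isStoppingSet_le_rpow (hd : 2 ≤ d) (hn : 0 < n) {μ : ℝ} (hm : μ * n * Real.log n ≤ m)
    (V : Finset (Fin n)) {x : ℝ} (hx₀ : 0 ≤ x) (hx : x * n + #V + k ≤ n) :
    prG n m k (fun ω => IsStoppingSet d ω V) ≤ (n : ℝ) ^ (-(μ * k * #V * x ^ (k - 1))) := by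
  have hn' : (0 : ℝ) < n := by exact_mod_cast hn
  refine (prG_isStoppingSet_le_exp hd V).trans ?_
  rw [Real.rpow_def_of_pos hn', Real.exp_le_exp, mul_neg, neg_le_neg_iff]
  calc Real.log n * (μ * k * #V * x ^ (k - 1))
      = μ * n * Real.log n * (k * (#V / n) * x ^ (k - 1)) := by field_simp
    _ ≤ m * singleHitProb k V :=
        mul_le_mul hm (mul_pow_le_singleHitProb V hx₀ hx) (by positivity) (Nat.cast_nonneg m)

theorem prG_isStoppingSet_le_rpow_one_sub (hd : 2 ≤ d) (hn : 0 < n) {μ : ℝ} (hμ : 0 ≤ μ)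
    (hm : μ * n * Real.log n ≤ m) {V : Finset (Fin n)} (hVn : #V + k ≤ n) :
    prG n m k (fun ω => IsStoppingSet d ω V) ≤
      (n : ℝ) ^ (-(μ * k * #V * (1 - k * ((#V + k) / n)))) := by
  have hn₁ : (1 : ℝ) ≤ n := by exact_mod_cast hn
  set y : ℝ := (#V + k) / n with hy
  have hy₁ : y ≤ 1 := by
    rw [hy, div_le_one (by positivity)]
    exact_mod_cast hVn
  have hy₀ : 0 ≤ y := by positivity
  have hbernoulli : 1 - k * y ≤ (1 - y) ^ (k - 1) := calc
    1 - k * y = 1 + k * -y := by ring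
    _ ≤ (1 + -y) ^ k := one_add_mul_le_pow (by linarith) k
    _ ≤ (1 - y) ^ (k - 1) := by
      rw [← sub_eq_add_neg]
      exact pow_le_pow_of_le_one (by linarith) (by linarith) (Nat.sub_le k 1)
  calc prG n m k (fun ω => IsStoppingSet d ω V)
      ≤ (n : ℝ) ^ (-(μ * k * #V * (1 - y) ^ (k - 1))) := by
        refine prG_isStoppingSet_le_rpow hd hn hm V (sub_nonneg.2 hy₁) (le_of_eq ?_)
        rw [hy]
        field_simp
        ring
    _ ≤ (n : ℝ) ^ (-(μ * k * #V * (1 - k * y))) := by gcongr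

-- Since `s² = s (s - 1) + s`, the Bernoulli error `μ k² s (s + k) log n / n` costs a factor
-- `n ^ δ` only for the elements of `V` after the first one, and a constant for every element.
theorem prG_isStoppingSet_le_mul_pow (hd : 2 ≤ d) {μ δ : ℝ} (hμ : 0 ≤ μ)
    (hm : μ * n * Real.log n ≤ m) {V : Finset (Fin n)} (hV : V.Nonempty) (hVn : #V + k ≤ n)
    (hδ : μ * k * k * #V ≤ δ * n) :
    prG n m k (fun ω => IsStoppingSet d ω V) ≤
      Real.exp (μ * k * k * (k + 1)) * (n : ℝ) ^ (-(μ * k)) *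
        (Real.exp (μ * k * k * (k + 1)) * (n : ℝ) ^ (δ - μ * k)) ^ (#V - 1) := by
  have hs : 1 ≤ #V := hV.card_pos
  have hn : (0 : ℝ) < n := by exact_mod_cast (by omega : 0 < n)
  refine (prG_isStoppingSet_le_rpow_one_sub hd (by exact_mod_cast hn) hμ hm hVn).trans ?_
  simp only [Real.rpow_def_of_pos hn, ← Real.exp_add, ← Real.exp_nat_mul]
  rw [Real.exp_le_exp, Nat.cast_sub hs, Nat.cast_one]
  set L := Real.log n
  have hquad : μ * k * k * #V / n * (L * (#V - 1)) ≤ δ * (L * (#V - 1)) := by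
    have hs' : (0 : ℝ) ≤ #V - 1 := sub_nonneg.2 (by exact_mod_cast hs)
    have : 0 ≤ L := Real.log_natCast_nonneg n
    gcongr
    rwa [div_le_iff₀ hn]
  have hlin : μ * k * k * (k + 1) * #V * (L / n) ≤ μ * k * k * (k + 1) * #V :=
    mul_le_of_le_one_right (by positivity) ((div_le_one hn).2 (Real.log_le_self hn.le))
  calc L * -(μ * k * #V * (1 - k * ((#V + k) / n)))
      = -(L * (μ * k) * #V) + μ * k * k * #V / n * (L * (#V - 1)) +
          μ * k * k * (k + 1) * #V * (L / n) := by ring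
    _ ≤ -(L * (μ * k) * #V) + δ * (L * (#V - 1)) + μ * k * k * (k + 1) * #V := by gcongr
    _ = _ := by ring

theorem prG_exists_nonempty_le (P : Finset (Fin n) → (Fin m → (Fin k ↪ Fin n)) → Prop)
    {B a r t : ℝ} (ha : 0 ≤ a) (hr : 0 < r) (hnr : n * r ≤ 1) (ht : 0 ≤ t)
    (h : ∀ V : Finset (Fin n), V.Nonempty → #V ≤ B → prG n m k (P V) ≤ a * r ^ (#V - 1) + t) :
    prG n m k (fun ω => ∃ V : Finset (Fin n), V.Nonempty ∧ #V ≤ B ∧ P V ω) ≤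
      2 * (n * a) + 2 ^ n * t := by
  classical
  calc prG n m k (fun ω => ∃ V : Finset (Fin n), V.Nonempty ∧ #V ≤ B ∧ P V ω)
      ≤ prG n m k (fun ω => ∃ V ∈ ({V : Finset (Fin n) | V.Nonempty ∧ #V ≤ B} : Finset _),
          P V ω) :=
        prG_mono fun ω ⟨V, hV, hVB, hω⟩ => ⟨V, by simp [hV, hVB], hω⟩
    _ ≤ ∑ V : Finset (Fin n) with V.Nonempty ∧ #V ≤ B, prG n m k (P V) :=
        prG_exists_mem_le_sum _ P
    _ ≤ ∑ V : Finset (Fin n) with V.Nonempty ∧ #V ≤ B, (a * r ^ (#V - 1) + t) :=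
        sum_le_sum fun V hV => h V (mem_filter.1 hV).2.1 (mem_filter.1 hV).2.2
    _ ≤ ∑ V : Finset (Fin n) with V.Nonempty, a * r ^ (#V - 1) + ∑ _V : Finset (Fin n), t := by
        rw [sum_add_distrib]
        gcongr <;> grind
    _ ≤ 2 * (n * a) + 2 ^ n * t := by
        have hgeom := sum_nonempty_pow_card_sub_one_le (α := Fin n) hr (by simpa using hnr)
        rw [Fintype.card_fin] at hgeom
        rw [← mul_sum, sum_const, card_univ, Fintype.card_finset, Fintype.card_fin, nsmul_eq_mul]
        push_cast
        linarith [mul_le_mul_of_nonneg_left hgeom ha]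

end Ensemble

theorem eventually_mul_rpow_neg_le_one (C : ℝ) {c : ℝ} (hc : 0 < c) :
    ∀ᶠ n : ℕ in atTop, C * (n : ℝ) ^ (-c) ≤ 1 := by
  have hlim := ((tendsto_rpow_neg_atTop hc).comp tendsto_natCast_atTop_atTop).const_mul C
  rw [mul_zero] at hlim
  exact hlim.eventually_le_const one_pos

theorem eventually_pow_mul_rpow_neg_mul_le {b c : ℝ} (hb : 0 ≤ b) (hc : 0 < c) (q : ℝ) :
    ∀ᶠ n : ℕ in atTop, b ^ n * (n : ℝ) ^ (-(c * n)) ≤ (n : ℝ) ^ q := by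
  filter_upwards [eventually_mul_rpow_neg_le_one b (half_pos hc),
    tendsto_natCast_atTop_atTop.eventually_ge_atTop (-q / (c / 2)),
    eventually_ge_atTop 1] with n hbase hexponent hn
  have hn₁ : (1 : ℝ) ≤ n := by exact_mod_cast hn
  rw [div_le_iff₀ (half_pos hc)] at hexponent
  calc b ^ n * (n : ℝ) ^ (-(c * n))
      = (b * (n : ℝ) ^ (-(c / 2))) ^ n * (n : ℝ) ^ (-(c / 2 * n)) := by
        rw [mul_pow, ← Real.rpow_mul_natCast (by positivity), mul_assoc,
          ← Real.rpow_add (by positivity)]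
        ring_nf
    _ ≤ 1 * (n : ℝ) ^ q := by
        gcongr
        · exact pow_le_one₀ (by positivity) hbase
        · linarith
    _ = (n : ℝ) ^ q := one_mul _

theorem exists_eventually_prG_isStoppingSet_le {d k : ℕ} (hd : 2 ≤ d) {α μ δ : ℝ} (hα : α < 1)
    (hμ : 0 < μ) (hk : 0 < k) (hδ : 0 < δ) :
    ∃ C > (0 : ℝ), ∃ c > (0 : ℝ), ∀ᶠ n : ℕ in atTop, ∀ m : ℕ, μ * n * Real.log n ≤ m →
      ∀ V : Finset (Fin n), V.Nonempty → #V ≤ α * n →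
        prG n m k (fun ω => IsStoppingSet d ω V) ≤
          C * (n : ℝ) ^ (-(μ * k)) * (C * (n : ℝ) ^ (δ - μ * k)) ^ (#V - 1) +
            (n : ℝ) ^ (-(c * n)) := by
  have hα' : 0 < (1 - α) / 2 := by linarith
  set β : ℝ := δ / (μ * k * k) with hβ
  have : 0 < β := by positivity
  refine ⟨Real.exp (μ * k * k * (k + 1)), Real.exp_pos _,
    μ * k * β * ((1 - α) / 2) ^ (k - 1), by positivity, ?_⟩
  filter_upwards [tendsto_natCast_atTop_atTop.eventually_ge_atTop (k / ((1 - α) / 2)),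
    eventually_ge_atTop 1] with n hkn hn m hm V hV hVα
  rw [div_le_iff₀ hα'] at hkn
  have hn₁ : (1 : ℝ) ≤ n := by exact_mod_cast hn
  have hVn : (1 - α) / 2 * n + #V + k ≤ n := by linarith
  rcases le_total (#V : ℝ) (β * n) with hsmall | hlarge
  · refine le_add_of_le_of_nonneg (prG_isStoppingSet_le_mul_pow hd hμ.le hm hV ?_ ?_)
      (by positivity)
    · have : (#V + k : ℝ) ≤ n := by nlinarith
      exact_mod_cast this
    · calc μ * k * k * #V ≤ μ * k * k * (β * n) := by gcongr
        _ = δ * n := by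
          rw [hβ]
          field_simp
  · refine le_add_of_nonneg_of_le (by positivity)
      ((prG_isStoppingSet_le_rpow hd hn hm V hα'.le hVn).trans ?_)
    refine Real.rpow_le_rpow_of_exponent_le hn₁ (neg_le_neg ?_)
    calc μ * k * β * ((1 - α) / 2) ^ (k - 1) * n = μ * k * (β * n) * ((1 - α) / 2) ^ (k - 1) := by
          ring
      _ ≤ μ * k * #V * ((1 - α) / 2) ^ (k - 1) := by gcongr

theorem stmt7_general (d k : ℕ) (hd : 2 ≤ d) (α : ℝ) (hα : α < 1) (μ : ℝ) (hμ : 1 < μ * k) :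
    (fun n : ℕ => prG n ⌈μ * (n : ℝ) * Real.log n⌉₊ k
        (fun ω : Fin ⌈μ * (n : ℝ) * Real.log n⌉₊ → (Fin k ↪ Fin n) =>
          ∃ V : Finset (Fin n), V.Nonempty ∧ (V.card : ℝ) ≤ α * n ∧ IsStoppingSet d ω V))
      =O[atTop] fun n : ℕ => (n : ℝ) ^ (1 - μ * k) := by
  have hμ₀ : 0 < μ := pos_of_mul_pos_left (one_pos.trans hμ) (Nat.cast_nonneg k)
  have hk : 0 < k := Nat.pos_of_ne_zero fun h => by norm_num [h] at hμ
  have hδ : 0 < (μ * k - 1) / 2 := by linarith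
  obtain ⟨C, hC, c, hc, hbound⟩ := exists_eventually_prG_isStoppingSet_le (d := d) hd hα hμ₀ hk hδ
  refine IsBigO.of_bound (2 * C + 1) ?_
  filter_upwards [hbound, eventually_pow_mul_rpow_neg_mul_le zero_le_two hc (1 - μ * k),
    eventually_mul_rpow_neg_le_one C hδ, eventually_gt_atTop 0] with n hV htail hratio hn
  have hn₀ : (0 : ℝ) < n := by exact_mod_cast hn
  have hmul (q : ℝ) : n * (C * (n : ℝ) ^ q) = C * (n : ℝ) ^ (1 + q) := by
    rw [Real.rpow_add hn₀, Real.rpow_one]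
    ring
  have hnr : n * (C * (n : ℝ) ^ ((μ * k - 1) / 2 - μ * k)) ≤ 1 := by
    refine le_of_eq_of_le ?_ hratio
    rw [hmul]
    ring_nf
  rw [Real.norm_of_nonneg (prG_nonneg _), Real.norm_of_nonneg (by positivity)]
  calc _ ≤ 2 * (n * (C * (n : ℝ) ^ (-(μ * k)))) + 2 ^ n * (n : ℝ) ^ (-(c * n)) :=
        prG_exists_nonempty_le _ (by positivity) (by positivity) hnr (by positivity)
          (hV _ (Nat.le_ceil _))
    _ ≤ 2 * (C * (n : ℝ) ^ (1 - μ * k)) + (n : ℝ) ^ (1 - μ * k) := by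
        rw [hmul, ← sub_eq_add_neg]
        gcongr
    _ = (2 * C + 1) * (n : ℝ) ^ (1 - μ * k) := by ring

/-- Lemma `lem:small`: for `m = ⌈μ n log n⌉` with `μ > 1/k` and
`ε ∈ (0, μk - 1)`, the probability that the random bipartite graph has a nonempty
`d`-stopping set of size at most `αn` is `O(n^{1-μk+ε})`. -/
theorem stmt7 (d k : ℕ) (hd : 2 ≤ d) (hdk : d ≤ k)
    (α : ℝ) (hα : α ∈ Set.Ioo (0 : ℝ) 1)
    (μ ε : ℝ) (hμ : 1 / (k : ℝ) < μ) (hε : ε ∈ Set.Ioo (0 : ℝ) (μ * k - 1)) :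
    (fun n : ℕ => prG n ⌈μ * (n : ℝ) * Real.log n⌉₊ k
        (fun ω : Fin ⌈μ * (n : ℝ) * Real.log n⌉₊ → (Fin k ↪ Fin n) =>
          ∃ V : Finset (Fin n), V.Nonempty ∧ (V.card : ℝ) ≤ α * n ∧ IsStoppingSet d ω V))
      =O[atTop] fun n : ℕ => (n : ℝ) ^ (1 - μ * k + ε) := by
  refine (stmt7_general d k hd α hα.2 μ (by linarith [hε.1, hε.2])).trans ?_
  refine IsBigO.of_norm_eventuallyLE ?_
  filter_upwards [eventually_ge_atTop 1] with n hn
  rw [Real.norm_of_nonneg (by positivity)]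
  exact Real.rpow_le_rpow_of_exponent_le (by exact_mod_cast hn) (by linarith [hε.1])
end
end

section
/- Fix integers 2 ≤ d ≤ k ≤ n and m ≥ 0, and let Z(l) denote the number of d-stopping sets of size exactly l in the random bipartite graph ensemble. Then for every l with 0 ≤ l ≤ n, the expected number of d-stopping sets of size l equals E[Z(l)] = binom(n,l) · ( Σ_{s ∈ {0} ∪ {d, d+1, …, k}} binom(l,s)·binom(n−l,k−s) / binom(n,k) )^m. In particular, for d = 2, E[Z(l)] = binom(n,l) · (1 − l·binom(n−l,k−1)/binom(n,k))^m. -/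
open Filter Finset Asymptotics

noncomputable section

/-!
By linearity of expectation it suffices to compute, for a fixed set `V` of size `l`, the probability
that every constraint meets `V` in an allowed number of variables. The constraints are independent,
so this is the `m`-th power of the probability for one constraint. The neighborhood of a single
constraint is a uniformly random `k`-subset, each one arising from `k!` tuples, so the size of its
intersection with `V` is hypergeometric. For `d = 2` the only forbidden size is `1`, and
Vandermonde's identity turns the sum over the allowed sizes into one minus the forbidden term.
-/

section Counting

variable {ι κ α : Type*}

lemma card_filter_forall_eq_pow [Fintype ι] [DecidableEq ι] [Fintype α] (p : α → Prop)
    [DecidablePred p] :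
    #{f : ι → α | ∀ a, p (f a)} = #{x | p x} ^ Fintype.card ι := by
  have hpi : ({f : ι → α | ∀ a, p (f a)} : Finset _) = Fintype.piFinset fun _ ↦ {x | p x} := by
    ext f
    simp only [mem_filter_univ, Fintype.mem_piFinset]
  rw [hpi, Fintype.card_piFinset, prod_const, card_univ]

variable [Fintype κ] [Fintype α]

lemma card_filter_embedding_map_univ_eq [DecidableEq α] {T : Finset α} (hT : #T = Fintype.card κ) :
    #{e : κ ↪ α | univ.map e = T} = (Fintype.card κ).factorial := by
  classical
  have hcard : Fintype.card (κ ↪ T) = (Fintype.card κ).factorial := by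
    rw [Fintype.card_embedding_eq, Fintype.card_coe, hT, Nat.descFactorial_self]
  rw [← hcard, ← card_univ]
  symm
  refine card_bij (fun f _ ↦ f.trans (.subtype _)) (fun f _ ↦ ?_) (fun f _ g _ hfg ↦ ?_)
    (fun e he ↦ ?_)
  · refine mem_filter.2 ⟨mem_univ _, eq_of_subset_of_card_le (fun x hx ↦ ?_) ?_⟩
    · obtain ⟨i, -, rfl⟩ := mem_map.1 hx
      exact (f i).2
    · rw [card_map, card_univ, hT]
  · ext i
    exact DFunLike.congr_fun hfg i
  · have hmem : ∀ i, e i ∈ T := fun i ↦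
      (mem_filter.1 he).2 ▸ mem_map_of_mem e (mem_univ i)
    exact ⟨e.codRestrict (T : Set α) hmem, mem_univ _, rfl⟩

lemma card_filter_embedding_map_univ (P : Finset α → Prop) [DecidablePred P] :
    #{e : κ ↪ α | P (univ.map e)} =
      #{T ∈ powersetCard (Fintype.card κ) univ | P T} * (Fintype.card κ).factorial := by
  classical
  rw [card_eq_sum_card_fiberwise (f := fun e : κ ↪ α ↦ univ.map e)
    (t := {T ∈ powersetCard (Fintype.card κ) univ | P T}), ← smul_eq_mul, ← sum_const]
  · refine sum_congr rfl fun T hT ↦ ?_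
    obtain ⟨hTcard, hPT⟩ := mem_filter.1 hT
    rw [← card_filter_embedding_map_univ_eq (mem_powersetCard.1 hTcard).2, filter_filter]
    congr 1
    exact filter_congr fun e _ ↦ ⟨And.right, fun h ↦ ⟨h ▸ hPT, h⟩⟩
  · intro e he
    simp only [mem_coe, mem_filter, mem_univ, true_and, mem_powersetCard] at he ⊢
    exact ⟨⟨subset_univ _, card_map e⟩, he⟩

end Counting

section Intersection

variable {ι κ α : Type*} [DecidableEq α]

lemma card_filter_powersetCard_card_inter_eq (U V : Finset α) {k s : ℕ} (hs : s ≤ k) :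
    #{T ∈ powersetCard k U | #(T ∩ V) = s} = (#(U ∩ V)).choose s * (#(U \ V)).choose (k - s) := by
  rw [← card_powersetCard, ← card_powersetCard, ← card_product]
  refine card_nbij' (fun T ↦ (T ∩ V, T \ V)) (fun AB ↦ AB.1 ∪ AB.2) ?_ ?_ ?_ ?_
  · intro T hT
    simp only [mem_coe, mem_filter, mem_product, mem_powersetCard] at hT ⊢
    obtain ⟨⟨hTU, hTk⟩, hTV⟩ := hT
    have hcard := card_inter_add_card_sdiff T V
    exact ⟨⟨inter_subset_inter_right hTU, hTV⟩, sdiff_subset_sdiff hTU le_rfl, by lia⟩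
  · rintro ⟨A, B⟩ hAB
    simp only [mem_coe, mem_filter, mem_product, mem_powersetCard] at hAB ⊢
    obtain ⟨⟨hA, hAs⟩, hB, hBs⟩ := hAB
    have hdisj : Disjoint A B := by grind [disjoint_left]
    have hinter : (A ∪ B) ∩ V = A := by grind
    exact ⟨⟨by grind, by rw [card_union_of_disjoint hdisj]; lia⟩, by rw [hinter, hAs]⟩
  · intro T _
    grind
  · rintro ⟨A, B⟩ hAB
    simp only [mem_coe, mem_product, mem_powersetCard] at hAB
    exact Prod.ext (by grind) (by grind)

lemma card_filter_powersetCard_card_inter (U V : Finset α) (k : ℕ) (p : ℕ → Prop)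
    [DecidablePred p] :
    #{T ∈ powersetCard k U | p #(T ∩ V)} =
      ∑ s ∈ range (k + 1) with p s, (#(U ∩ V)).choose s * (#(U \ V)).choose (k - s) := by
  rw [card_eq_sum_card_fiberwise (f := fun T ↦ #(T ∩ V)) (t := {s ∈ range (k + 1) | p s})]
  · refine sum_congr rfl fun s hs ↦ ?_
    obtain ⟨hsk, hps⟩ := mem_filter.1 hs
    rw [← card_filter_powersetCard_card_inter_eq U V (mem_range_succ_iff.1 hsk), filter_filter]
    congr 1
    exact filter_congr fun T _ ↦ ⟨And.right, fun h ↦ ⟨h ▸ hps, h⟩⟩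
  · intro T hT
    simp only [mem_coe, mem_filter, mem_powersetCard, mem_range_succ_iff] at hT ⊢
    exact ⟨hT.1.2 ▸ card_le_card inter_subset_left, hT.2⟩

variable [Fintype κ] [Fintype α]

lemma card_filter_embedding_card_map_univ_inter (V : Finset α) (p : ℕ → Prop) [DecidablePred p] :
    #{e : κ ↪ α | p #(univ.map e ∩ V)} =
      (∑ s ∈ range (Fintype.card κ + 1) with p s,
        (#V).choose s * (Fintype.card α - #V).choose (Fintype.card κ - s)) *
        (Fintype.card κ).factorial := by
  rw [card_filter_embedding_map_univ (fun T ↦ p #(T ∩ V)), card_filter_powersetCard_card_inter,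
    univ_inter, ← compl_eq_univ_sdiff, card_compl]

lemma sum_card_filter_card_map_univ_inter [Fintype ι] [DecidableEq ι] (p : ℕ → Prop)
    [DecidablePred p] (l : ℕ) :
    ∑ ω : ι → (κ ↪ α), #{V : Finset α | #V = l ∧ ∀ a, p #(univ.map (ω a) ∩ V)} =
      (Fintype.card α).choose l *
        ((∑ s ∈ range (Fintype.card κ + 1) with p s,
          l.choose s * (Fintype.card α - l).choose (Fintype.card κ - s)) *
          (Fintype.card κ).factorial) ^ Fintype.card ι := by
  calc
    _ = ∑ ω : ι → (κ ↪ α), #{V ∈ powersetCard l univ | ∀ a, p #(univ.map (ω a) ∩ V)} := by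
      simp only [← filter_filter, powersetCard_eq_filter, powerset_univ]
    _ = ∑ V ∈ powersetCard l univ, #{ω : ι → (κ ↪ α) | ∀ a, p #(univ.map (ω a) ∩ V)} :=
      sum_card_bipartiteAbove_eq_sum_card_bipartiteBelow _
    _ = _ := by
      rw [← card_univ (α := α), ← card_powersetCard, ← smul_eq_mul, ← sum_const]
      refine sum_congr rfl fun V hV ↦ ?_
      rw [card_filter_forall_eq_pow fun e : κ ↪ α ↦ p #(univ.map e ∩ V),
        card_filter_embedding_card_map_univ_inter, (mem_powersetCard.1 hV).2, card_univ]

end Intersection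

lemma sum_range_choose_mul_choose_sub {l n : ℕ} (hl : l ≤ n) (k : ℕ) :
    ∑ s ∈ range (k + 1), l.choose s * (n - l).choose (k - s) = n.choose k := by
  rw [← Nat.sum_antidiagonal_eq_sum_range_succ fun i j ↦ l.choose i * (n - l).choose j,
    ← Nat.add_choose_eq, Nat.add_sub_cancel' hl]

lemma sum_filter_choose_mul_choose_div_eq_one_sub {K : Type*} [DivisionRing K] [CharZero K]
    {l n k : ℕ} (hl : l ≤ n) (hk : k ≤ n) (p : ℕ → Prop) [DecidablePred p] :
    (∑ s ∈ range (k + 1) with p s, (l.choose s : K) * ((n - l).choose (k - s) : K)) /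
        (n.choose k : K) =
      1 - (∑ s ∈ range (k + 1) with ¬p s, (l.choose s : K) * ((n - l).choose (k - s) : K)) /
        (n.choose k : K) := by
  have hchoose : (n.choose k : K) ≠ 0 := mod_cast (Nat.choose_pos hk).ne'
  have hvandermonde : ∑ s ∈ range (k + 1), (l.choose s : K) * ((n - l).choose (k - s) : K) =
      (n.choose k : K) := mod_cast sum_range_choose_mul_choose_sub hl k
  rw [eq_sub_iff_add_eq, ← add_div, sum_filter_add_sum_filter_not, hvandermonde,
    div_self hchoose]

lemma filter_range_succ_eq_zero_or_le (d k : ℕ) :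
    {s ∈ range (k + 1) | s = 0 ∨ d ≤ s} = insert 0 (Icc d k) := by
  grind

lemma filter_range_succ_not_eq_zero_or_two_le {k : ℕ} (hk : 1 ≤ k) :
    {s ∈ range (k + 1) | ¬(s = 0 ∨ 2 ≤ s)} = {1} := by
  grind

lemma isStoppingSet_iff {n m k d : ℕ} {ω : Fin m → (Fin k ↪ Fin n)} {V : Finset (Fin n)} :
    IsStoppingSet d ω V ↔ ∀ a, #(univ.map (ω a) ∩ V) = 0 ∨ d ≤ #(univ.map (ω a) ∩ V) := by
  simp only [IsStoppingSet, nbhd, map_eq_image]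

theorem stmt8_general {ι κ α : Type*} [Fintype ι] [DecidableEq ι] [Fintype κ] [Fintype α]
    [DecidableEq α] (hκα : Fintype.card κ ≤ Fintype.card α) (p : ℕ → Prop)
    [DecidablePred p] {l : ℕ} (hl : l ≤ Fintype.card α) :
    (∑ ω : ι → (κ ↪ α), (#{V : Finset α | #V = l ∧ ∀ a, p #(univ.map (ω a) ∩ V)} : ℝ)) /
        (Fintype.card (ι → (κ ↪ α)) : ℝ) =
      ((Fintype.card α).choose l : ℝ) *
        ((∑ s ∈ range (Fintype.card κ + 1) with p s,
            (l.choose s : ℝ) * ((Fintype.card α - l).choose (Fintype.card κ - s) : ℝ)) /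
          ((Fintype.card α).choose (Fintype.card κ) : ℝ)) ^ Fintype.card ι ∧
    (∑ ω : ι → (κ ↪ α), (#{V : Finset α | #V = l ∧ ∀ a, p #(univ.map (ω a) ∩ V)} : ℝ)) /
        (Fintype.card (ι → (κ ↪ α)) : ℝ) =
      ((Fintype.card α).choose l : ℝ) *
        (1 - (∑ s ∈ range (Fintype.card κ + 1) with ¬p s,
            (l.choose s : ℝ) * ((Fintype.card α - l).choose (Fintype.card κ - s) : ℝ)) /
          ((Fintype.card α).choose (Fintype.card κ) : ℝ)) ^ Fintype.card ι := by
  classical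
  rw [← sum_filter_choose_mul_choose_div_eq_one_sub hl hκα p, and_self]
  have hfact : ((Fintype.card κ).factorial : ℝ) ≠ 0 := mod_cast Nat.factorial_ne_zero _
  rw [← Nat.cast_sum, sum_card_filter_card_map_univ_inter, Fintype.card_fun,
    Fintype.card_embedding_eq, Nat.descFactorial_eq_factorial_mul_choose,
    mul_comm (Nat.factorial _)]
  push_cast
  rw [mul_div_assoc, ← div_pow, mul_div_mul_right _ _ hfact]

/-- exact formula for the expected number `E[Z(l)]` of `d`-stopping sets of
size `l` in the random bipartite graph ensemble, and its specialization to `d = 2`. -/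
theorem stmt8 (n m k d l : ℕ) (hd : 2 ≤ d) (hdk : d ≤ k) (hkn : k ≤ n) (hl : l ≤ n) :
    (∑ ω : Fin m → (Fin k ↪ Fin n),
        ((Finset.univ.filter fun V : Finset (Fin n) =>
            V.card = l ∧ IsStoppingSet d ω V).card : ℝ))
      / (Fintype.card (Fin m → (Fin k ↪ Fin n)) : ℝ)
    = (n.choose l : ℝ) *
        ((∑ s ∈ insert 0 (Finset.Icc d k),
            (l.choose s : ℝ) * ((n - l).choose (k - s) : ℝ)) / (n.choose k : ℝ)) ^ m ∧
    (d = 2 →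
      (∑ ω : Fin m → (Fin k ↪ Fin n),
          ((Finset.univ.filter fun V : Finset (Fin n) =>
              V.card = l ∧ IsStoppingSet d ω V).card : ℝ))
        / (Fintype.card (Fin m → (Fin k ↪ Fin n)) : ℝ)
      = (n.choose l : ℝ) *
          (1 - (l : ℝ) * ((n - l).choose (k - 1) : ℝ) / (n.choose k : ℝ)) ^ m) := by
  have ⟨hallowed, hforbidden⟩ := stmt8_general (ι := Fin m) (κ := Fin k) (α := Fin n)
    (by simpa using hkn) (fun s ↦ s = 0 ∨ d ≤ s) (l := l) (by simpa using hl)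
  simp only [← isStoppingSet_iff, Fintype.card_fin, filter_range_succ_eq_zero_or_le]
    at hallowed hforbidden
  refine ⟨hallowed, ?_⟩
  rintro rfl
  simpa only [filter_range_succ_not_eq_zero_or_two_le (one_le_two.trans hdk), sum_singleton,
    Nat.choose_one_right] using hforbidden
end
end

section
/- Fix integers k ≥ r ≥ 3, u ∈ ω(1) ∩ o(n), a constant μ > μ_c(k,r), and set m = ⌈μ·n^{r−1}/u(n)^{r−2}⌉. Consider the Markov chain for the lower bound driven by the random ensemble. Then for all sufficiently small ε > 0 there exists δ > 0 such that, for all sufficiently large n, Pr( C̲_{k−r+2}(⌊u(n)/(r−2)⌋) ≤ (1/((k−r+2)(k−r+1)) + ε)·n ) ≤ exp(−δn). -/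
open Filter Finset Asymptotics

noncomputable section

/-- The binomial point mass `binom(n,i) p^i (1-p)^(n-i)`. -/
def binomPMF (n : ℕ) (p : ℝ) (i : ℕ) : ℝ := (n.choose i : ℝ) * p ^ i * (1 - p) ^ (n - i)

/-- `C_j(0)`: the number of constraints whose neighborhood meets the unknown
variables `{u+1,…,n}` in exactly `j` variables. -/
def Cinit (n m k u : ℕ) (ω : Fin m → (Fin k ↪ Fin n)) (j : ℕ) : ℕ :=
  (Finset.univ.filter fun a : Fin m =>
    ((nbhd ω a).filter fun i : Fin n => u ≤ (i : ℕ)).card = j).card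

/-- Initial state of the peeling Markov chains: `E(0) = ∑_{j=1}^{k-r+1} j C_j(0)` and
`C_j(0)` for every `j`. -/
def initState (n m k r u : ℕ) (ω : Fin m → (Fin k ↪ Fin n)) : ℤ × (ℕ → ℕ) :=
  (∑ j ∈ Finset.Icc 1 (k - r + 1), (j : ℤ) * (Cinit n m k u ω j : ℤ),
   fun j => Cinit n m k u ω j)

/-- Extend a vector `R : Fin (r-1) → ℕ` (indexed by `j = k-r+2,…,k`) to all of `ℕ` by `0`. -/
def Rext (k r : ℕ) (R : Fin (r - 1) → ℕ) (j : ℕ) : ℕ :=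
  if h : k - r + 2 ≤ j ∧ j - (k - r + 2) < r - 1 then R ⟨j - (k - r + 2), h.2⟩ else 0

/-- One-step transition operator (at time `t`) of the Markov chain for the upper bound:
`(T_t g)(s) = E[g(next state) | state at time t = s]`, where independently
`R̄_j ~ Binom(C̄_j, j/N(t))` for `j = k-r+2,…,k`, `C̄_k` is unchanged,
`C̄_j ← C̄_j + R̄_{j+1}` for `j = k-r+2,…,k-1`, and `Ē ← Ē - 1 + (k-r+1) R̄_{k-r+2}`. -/
def upperStep (k r n u t : ℕ) (g : ℤ × (ℕ → ℕ) → ℝ) (s : ℤ × (ℕ → ℕ)) : ℝ :=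
  ∑' R : Fin (r - 1) → ℕ,
    (∏ i : Fin (r - 1),
      binomPMF (s.2 (k - r + 2 + (i : ℕ)))
        (((k - r + 2 + (i : ℕ) : ℕ) : ℝ) / ((n : ℝ) - (u : ℝ) - (t : ℝ))) (R i)) *
    g (s.1 - 1 + ((k - r + 1 : ℕ) : ℤ) * (Rext k r R (k - r + 2) : ℤ),
       fun j => if k - r + 2 ≤ j ∧ j < k then s.2 j + Rext k r R (j + 1) else s.2 j)

/-- `upperIter k r n u s t g = T_s (T_{s+1} (⋯ (T_{s+t-1} g)))`, so that
`E[g(X_t)] = E[(upperIter k r n u 0 t g) (X_0)]` for the upper-bound chain. -/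
def upperIter (k r n u : ℕ) : ℕ → ℕ → (ℤ × (ℕ → ℕ) → ℝ) → ℤ × (ℕ → ℕ) → ℝ
  | _, 0, g => g
  | s, t + 1, g => upperStep k r n u s (upperIter k r n u (s + 1) t g)

/-- `E[g(X̄(t))]` for the upper-bound Markov chain driven by the random ensemble. -/
def upperE (k r n u m t : ℕ) (g : ℤ × (ℕ → ℕ) → ℝ) : ℝ :=
  (∑ ω : Fin m → (Fin k ↪ Fin n), upperIter k r n u 0 t g (initState n m k r u ω))
    / (Fintype.card (Fin m → (Fin k ↪ Fin n)) : ℝ)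

/-- One-step transition operator (at time `t`) of the Markov chain for the lower bound:
independently `R̲_j ~ Binom(C̲_j, j/N(t))` for `j = k-r+2,…,k` and
`S̲ ~ Binom(E̲+t, 1/(N(t)-k+r))`; then `C̲_k ← C̲_k - R̲_k`,
`C̲_j ← C̲_j - R̲_j + R̲_{j+1}` for `j = k-r+2,…,k-1`, and
`E̲ ← E̲ - 1 - S̲ + (k-r+1) R̲_{k-r+2}`. -/
def lowerStep (k r n u t : ℕ) (g : ℤ × (ℕ → ℕ) → ℝ) (s : ℤ × (ℕ → ℕ)) : ℝ :=
  ∑' RS : (Fin (r - 1) → ℕ) × ℕ,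
    ((∏ i : Fin (r - 1),
        binomPMF (s.2 (k - r + 2 + (i : ℕ)))
          (((k - r + 2 + (i : ℕ) : ℕ) : ℝ) / ((n : ℝ) - (u : ℝ) - (t : ℝ))) (RS.1 i)) *
      binomPMF (s.1 + (t : ℤ)).toNat
        (1 / ((n : ℝ) - (u : ℝ) - (t : ℝ) - (k : ℝ) + (r : ℝ))) RS.2) *
    g (s.1 - 1 - (RS.2 : ℤ) + ((k - r + 1 : ℕ) : ℤ) * (Rext k r RS.1 (k - r + 2) : ℤ),
       fun j => if k - r + 2 ≤ j ∧ j ≤ k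
         then s.2 j - Rext k r RS.1 j + Rext k r RS.1 (j + 1) else s.2 j)

/-- `lowerIter k r n u s t g = T_s (T_{s+1} (⋯ (T_{s+t-1} g)))` for the lower-bound chain. -/
def lowerIter (k r n u : ℕ) : ℕ → ℕ → (ℤ × (ℕ → ℕ) → ℝ) → ℤ × (ℕ → ℕ) → ℝ
  | _, 0, g => g
  | s, t + 1, g => lowerStep k r n u s (lowerIter k r n u (s + 1) t g)

/-- `E[g(X̲(t))]` for the lower-bound Markov chain driven by the random ensemble. -/
def lowerE (k r n u m t : ℕ) (g : ℤ × (ℕ → ℕ) → ℝ) : ℝ :=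
  (∑ ω : Fin m → (Fin k ↪ Fin n), lowerIter k r n u 0 t g (initState n m k r u ω))
    / (Fintype.card (Fin m → (Fin k ↪ Fin n)) : ℝ)

/-! The constraints evolve independently of each other: at time `t` a constraint with `j` unknown
variables loses one of them with probability `j / N(t)`, just as if the variables were revealed one
by one in uniformly random order. Hence after `τ` steps a random constraint has exactly
`d = k - r + 2` unknown variables with the hypergeometric probability
`p = binom(n - u - τ, d) binom(u + τ, r - 2) / binom(n, k)`, and the tracked coordinate is binomial
with parameters `m` and `p`. This is made exact through generating functions: a step of the chain
maps product test functions to product test functions, so `E[z ^ C] = (1 + (z - 1) p) ^ m`.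
For `τ = ⌊u / (r - 2)⌋` the mean `m p` is asymptotically at least
`μ binom(k, r - 2) (1 + 1 / (r - 2)) ^ (r - 2) n`, and this exceeds
`n / ((k - r + 2) (k - r + 1))` exactly when `μ` exceeds `μ_c(k, r)`; Chernoff's bound concludes.
-/

section Hypergeometric

/-- The number of `j`-element subsets of an `(M + τ)`-element set which meet a fixed `M`-element
subset in exactly `d` elements. The guard is there because `j - d` truncates. -/
def hypergeomCount (M τ d j : ℕ) : ℕ :=
  if d ≤ j then M.choose d * τ.choose (j - d) else 0

/-- The hypergeometric probability that a uniformly random `j`-element subset of an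
`(M + τ)`-element set meets a fixed `M`-element subset in exactly `d` elements. Along the chain it
is the probability that a constraint with `j` unknown variables has `d` of them left once `τ`
variables have been revealed and `M` are still unknown. -/
def hypergeomProb (M τ d j : ℕ) : ℝ :=
  hypergeomCount M τ d j / (M + τ).choose j

lemma hypergeomCount_add (M τ d w : ℕ) :
    hypergeomCount M τ d (d + w) = M.choose d * τ.choose w := by
  simp [hypergeomCount]

lemma hypergeomCount_eq_zero_of_lt {d j : ℕ} (h : j < d) (M τ : ℕ) : hypergeomCount M τ d j = 0 :=
  if_neg h.not_ge

lemma hypergeomCount_succ_succ (M τ d j : ℕ) :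
    hypergeomCount M (τ + 1) d (j + 1)
      = hypergeomCount M τ d (j + 1) + hypergeomCount M τ d j := by
  rcases lt_trichotomy d (j + 1) with h | rfl | h
  · obtain ⟨w, rfl⟩ := Nat.exists_eq_add_of_le (Nat.le_of_lt_succ h)
    simp only [Nat.add_assoc, hypergeomCount_add, Nat.choose_succ_succ', Nat.mul_add, Nat.add_comm]
  · simp [hypergeomCount]
  · simp only [hypergeomCount_eq_zero_of_lt h,
      hypergeomCount_eq_zero_of_lt (Nat.lt_of_succ_lt h), Nat.add_zero]

lemma hypergeomCount_le_choose (M τ d j : ℕ) : hypergeomCount M τ d j ≤ (M + τ).choose j := by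
  rw [hypergeomCount]
  split_ifs with h
  · rw [Nat.add_choose_eq]
    exact single_le_sum (f := fun ij : ℕ × ℕ => M.choose ij.1 * τ.choose ij.2)
      (fun _ _ => Nat.zero_le _)
      (mem_antidiagonal.2 (Nat.add_sub_of_le h : (d, j - d).1 + (d, j - d).2 = j))
  · exact Nat.zero_le _

/-- Removing `u` elements and then `τ` further ones is the same as removing `u + τ` at once. -/
lemma sum_hypergeomCount_mul_hypergeomProb {M τ u d k : ℕ} (hk : k ≤ M + τ) :
    ∑ j ∈ range (k + 1), (hypergeomCount (M + τ) u j k : ℝ) * hypergeomProb M τ d j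
      = hypergeomCount M (u + τ) d k := by
  have cancel : ∀ j ∈ range (k + 1), (hypergeomCount (M + τ) u j k : ℝ) * hypergeomProb M τ d j
      = (hypergeomCount M τ d j * u.choose (k - j) : ℕ) := by
    intro j hj
    have hjk : j ≤ k := Nat.le_of_lt_succ (mem_range.1 hj)
    have hpos : ((M + τ).choose j : ℝ) ≠ 0 :=
      mod_cast (Nat.choose_pos (hjk.trans hk)).ne'
    rw [hypergeomProb, hypergeomCount, if_pos hjk]
    push_cast
    field_simp
  rw [sum_congr rfl cancel, ← Nat.cast_sum, Nat.cast_inj]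
  rcases lt_or_ge k d with h | h
  · rw [hypergeomCount_eq_zero_of_lt h]
    exact sum_eq_zero fun j hj => by
      rw [hypergeomCount_eq_zero_of_lt (by grind), Nat.zero_mul]
  · obtain ⟨w, rfl⟩ := Nat.exists_eq_add_of_le h
    have below : ∑ j ∈ range d, hypergeomCount M τ d j * u.choose (d + w - j) = 0 :=
      sum_eq_zero fun j hj => by rw [hypergeomCount_eq_zero_of_lt (mem_range.1 hj), Nat.zero_mul]
    rw [Nat.add_assoc, sum_range_add, below, Nat.zero_add, hypergeomCount_add, Nat.add_comm u τ,
      Nat.add_choose_eq, Nat.sum_antidiagonal_eq_sum_range_succ_mk, mul_sum]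
    refine sum_congr rfl fun i _ => ?_
    rw [hypergeomCount_add, Nat.add_sub_add_left, Nat.mul_assoc]

lemma hypergeomProb_nonneg (M τ d j : ℕ) : 0 ≤ hypergeomProb M τ d j :=
  div_nonneg (Nat.cast_nonneg _) (Nat.cast_nonneg _)

lemma hypergeomProb_le_one (M τ d j : ℕ) : hypergeomProb M τ d j ≤ 1 :=
  div_le_one_of_le₀ (mod_cast hypergeomCount_le_choose M τ d j) (Nat.cast_nonneg _)

lemma hypergeomProb_eq_zero_of_lt {d j : ℕ} (h : j < d) (M τ : ℕ) : hypergeomProb M τ d j = 0 := by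
  rw [hypergeomProb, hypergeomCount_eq_zero_of_lt h, Nat.cast_zero, zero_div]

lemma hypergeomProb_zero_self {M d : ℕ} (hd : d ≤ M) : hypergeomProb M 0 d d = 1 := by
  have : (M.choose d : ℝ) ≠ 0 := mod_cast (Nat.choose_pos hd).ne'
  simp [hypergeomProb, hypergeomCount, this]

lemma hypergeomProb_zero_of_ne {d j : ℕ} (h : j ≠ d) (M : ℕ) : hypergeomProb M 0 d j = 0 := by
  rcases h.lt_or_gt with h | h
  · exact hypergeomProb_eq_zero_of_lt h M 0
  · simp [hypergeomProb, hypergeomCount, Nat.choose_eq_zero_of_lt (Nat.sub_pos_of_lt h)]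

lemma succ_div_succ_eq_choose_div_choose {N i : ℕ} (h : i ≤ N) :
    ((i + 1 : ℕ) : ℝ) / (N + 1 : ℕ) = N.choose i / (N + 1).choose (i + 1) := by
  have hpos : ((N + 1).choose (i + 1) : ℝ) ≠ 0 := mod_cast (Nat.choose_pos (by lia)).ne'
  rw [div_eq_div_iff (by positivity) hpos, mul_comm, mul_comm (N.choose i : ℝ)]
  exact_mod_cast (Nat.add_one_mul_choose_eq N i).symm

lemma one_sub_succ_div_succ_eq_choose_div_choose {N i : ℕ} (h : i ≤ N) :
    1 - ((i + 1 : ℕ) : ℝ) / (N + 1 : ℕ) = N.choose (i + 1) / (N + 1).choose (i + 1) := by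
  have hpos : ((N + 1).choose (i + 1) : ℝ) ≠ 0 := mod_cast (Nat.choose_pos (by lia)).ne'
  rw [succ_div_succ_eq_choose_div_choose h, one_sub_div hpos, Nat.choose_succ_succ']
  push_cast
  ring

/-- Condition on whether the first of the `τ + 1` revealed elements belongs to the `j`-subset. -/
lemma hypergeomProb_succ {M τ j : ℕ} (d : ℕ) (hj : j ≤ M + τ) :
    hypergeomProb M (τ + 1) d j
      = (1 - (j : ℝ) / (M + τ + 1 : ℕ)) * hypergeomProb M τ d j
        + (j : ℝ) / (M + τ + 1 : ℕ) * hypergeomProb M τ d (j - 1) := by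
  cases j with
  | zero => simp [hypergeomProb, hypergeomCount]
  | succ i =>
    have hi : ((M + τ).choose i : ℝ) ≠ 0 := mod_cast (Nat.choose_pos (by lia)).ne'
    have hi' : ((M + τ).choose (i + 1) : ℝ) ≠ 0 := mod_cast (Nat.choose_pos hj).ne'
    rw [one_sub_succ_div_succ_eq_choose_div_choose (Nat.le_of_succ_le hj),
      succ_div_succ_eq_choose_div_choose (Nat.le_of_succ_le hj), Nat.add_sub_cancel]
    simp only [hypergeomProb, hypergeomCount_succ_succ, Nat.cast_add, ← Nat.add_assoc]
    field_simp

lemma card_filter_powersetCard_filter {α : Type*} (s : Finset α) (p : α → Prop) [DecidablePred p]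
    (k j : ℕ) :
    #{t ∈ powersetCard k s | #{x ∈ t | p x} = j}
      = hypergeomCount #{x ∈ s | p x} #{x ∈ s | ¬p x} j k := by
  classical
  rw [hypergeomCount]
  split_ifs with hj
  · rw [← card_powersetCard, ← card_powersetCard, ← card_product]
    refine card_nbij' (fun t => ({x ∈ t | p x}, {x ∈ t | ¬p x})) (fun t => t.1 ∪ t.2) ?_ ?_ ?_ ?_
    · intro t ht
      have := card_filter_add_card_filter_not (s := t) p
      simp only [coe_filter, mem_powersetCard, Set.mem_ofPred_eq] at ht
      simp only [coe_product, Set.mem_prod, mem_coe, mem_powersetCard]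
      exact ⟨⟨filter_subset_filter _ ht.1.1, ht.2⟩, filter_subset_filter _ ht.1.1, by lia⟩
    · rintro ⟨t₁, t₂⟩ ht
      simp only [coe_product, Set.mem_prod, mem_coe, mem_powersetCard, subset_iff, mem_filter] at ht
      have hdisj : Disjoint t₁ t₂ := disjoint_left.2 (by grind)
      have hp : ({x ∈ t₁ ∪ t₂ | p x} : Finset α) = t₁ := by grind
      simp only [coe_filter, mem_powersetCard, Set.mem_ofPred_eq, hp, card_union_of_disjoint hdisj]
      grind
    · intro t _
      exact filter_union_filter_not_eq _ _
    · rintro ⟨t₁, t₂⟩ ht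
      simp only [coe_product, Set.mem_prod, mem_coe, mem_powersetCard, subset_iff, mem_filter] at ht
      ext x <;> grind
  · refine card_eq_zero.2 (filter_eq_empty_iff.2 fun t ht htj => hj ?_)
    rw [← htj, ← (mem_powersetCard.1 ht).2]
    exact card_filter_le _ _

lemma card_embedding_image_eq {ι α : Type*} [Fintype ι] [Fintype α] [DecidableEq α]
    {s : Finset α} (hs : #s = Fintype.card ι) :
    #{e : ι ↪ α | univ.image e = s} = (Fintype.card ι).factorial := by
  classical
  have image_eq_iff : ∀ e : ι ↪ α, univ.image e = s ↔ ∀ i, e i ∈ (s : Set α) := by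
    intro e
    refine ⟨fun h i => h ▸ mem_coe.2 (mem_image_of_mem e (mem_univ i)), fun h => ?_⟩
    refine eq_of_subset_of_card_le (image_subset_iff.2 fun i _ => h i) ?_
    rw [card_image_of_injective _ e.injective, hs, card_univ]
  rw [← Fintype.card_subtype, Fintype.card_congr ((Equiv.subtypeEquivRight image_eq_iff).trans
    (Equiv.codRestrict ι (s : Set α))), Fintype.card_embedding_eq]
  simp [hs, Nat.descFactorial_self]

lemma card_embedding_filter_image {ι α : Type*} [Fintype ι] [Fintype α] [DecidableEq α]
    (p : α → Prop) [DecidablePred p] (j : ℕ) :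
    #{e : ι ↪ α | #{x ∈ univ.image e | p x} = j}
      = hypergeomCount #{x | p x} #{x | ¬p x} j (Fintype.card ι) * (Fintype.card ι).factorial := by
  classical
  rw [← card_filter_powersetCard_filter]
  refine card_eq_sum_card_fiberwise (f := fun e : ι ↪ α => univ.image e) ?_ |>.trans
    (sum_const_nat fun s hs => ?_)
  · intro e he
    have : #(univ.image e) = Fintype.card ι := card_image_of_injective _ e.injective
    simpa [this] using he
  · obtain ⟨hs, hsj⟩ := mem_filter.1 hs
    rw [← card_embedding_image_eq (ι := ι) (mem_powersetCard.1 hs).2, filter_filter]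
    congr 1
    grind

end Hypergeometric

section Binomial

lemma binomPMF_nonneg {p : ℝ} (hp₀ : 0 ≤ p) (hp₁ : p ≤ 1) (N i : ℕ) : 0 ≤ binomPMF N p i := by
  have : 0 ≤ 1 - p := sub_nonneg.2 hp₁
  unfold binomPMF
  positivity

lemma binomPMF_eq_zero_of_lt {N i : ℕ} (h : N < i) (p : ℝ) : binomPMF N p i = 0 := by
  simp [binomPMF, Nat.choose_eq_zero_of_lt h]

lemma sum_binomPMF_mul_pow_mul_pow (N : ℕ) (p y z : ℝ) :
    ∑ i ∈ range (N + 1), binomPMF N p i * (y ^ (N - i) * z ^ i) = ((1 - p) * y + p * z) ^ N := by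
  rw [add_comm ((1 - p) * y), add_pow]
  refine sum_congr rfl fun i _ => ?_
  rw [binomPMF, mul_pow, mul_pow]
  ring

lemma sum_binomPMF (N : ℕ) (p : ℝ) : ∑ i ∈ range (N + 1), binomPMF N p i = 1 := by
  simpa using sum_binomPMF_mul_pow_mul_pow N p 1 1

end Binomial

/-- Probability that the lower-bound chain draws `RS = (R̲, S̲)` at time `t` in state `s`. -/
def lowerKernel (k r n u t : ℕ) (s : ℤ × (ℕ → ℕ)) (RS : (Fin (r - 1) → ℕ) × ℕ) : ℝ :=
  (∏ i : Fin (r - 1), binomPMF (s.2 (k - r + 2 + (i : ℕ)))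
      (((k - r + 2 + (i : ℕ) : ℕ) : ℝ) / ((n : ℝ) - (u : ℝ) - (t : ℝ))) (RS.1 i)) *
    binomPMF (s.1 + (t : ℤ)).toNat (1 / ((n : ℝ) - (u : ℝ) - (t : ℝ) - (k : ℝ) + (r : ℝ))) RS.2

/-- The state that the lower-bound chain enters from `s` after drawing `RS = (R̲, S̲)`. -/
def lowerNext (k r : ℕ) (s : ℤ × (ℕ → ℕ)) (RS : (Fin (r - 1) → ℕ) × ℕ) : ℤ × (ℕ → ℕ) :=
  (s.1 - 1 - (RS.2 : ℤ) + ((k - r + 1 : ℕ) : ℤ) * (Rext k r RS.1 (k - r + 2) : ℤ),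
    fun j => if k - r + 2 ≤ j ∧ j ≤ k
      then s.2 j - Rext k r RS.1 j + Rext k r RS.1 (j + 1) else s.2 j)

/-- A finite set of draws `(R̲, S̲)` outside which `lowerKernel` vanishes. -/
def lowerDraws (k r t : ℕ) (s : ℤ × (ℕ → ℕ)) : Finset ((Fin (r - 1) → ℕ) × ℕ) :=
  (Fintype.piFinset fun i : Fin (r - 1) => range (s.2 (k - r + 2 + (i : ℕ)) + 1)) ×ˢ
    range ((s.1 + (t : ℤ)).toNat + 1)

/-- The product test function `∏ⱼ y(j) ^ Cⱼ` over `j = k-r+2,…,k`: each constraint with `j` unknown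
variables carries a factor `y j`. -/
def stateWeight (k r : ℕ) (y : ℕ → ℝ) (s : ℤ × (ℕ → ℕ)) : ℝ :=
  ∏ i : Fin (r - 1), y (k - r + 2 + (i : ℕ)) ^ s.2 (k - r + 2 + (i : ℕ))

section LowerChain

variable {k r n u t τ : ℕ} {g g' : ℤ × (ℕ → ℕ) → ℝ} {s : ℤ × (ℕ → ℕ)} {y y' : ℕ → ℝ}

lemma lowerKernel_eq_zero_of_notMem {RS : (Fin (r - 1) → ℕ) × ℕ} (h : RS ∉ lowerDraws k r t s) :
    lowerKernel k r n u t s RS = 0 := by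
  simp only [lowerDraws, mem_product, Fintype.mem_piFinset, mem_range, not_and_or, not_forall,
    Nat.lt_succ_iff, not_le] at h
  rcases h with ⟨i, hi⟩ | h
  · rw [lowerKernel, prod_eq_zero (mem_univ i) (binomPMF_eq_zero_of_lt hi _), zero_mul]
  · rw [lowerKernel, binomPMF_eq_zero_of_lt h, mul_zero]

lemma lowerStep_eq_sum : lowerStep k r n u t g s
    = ∑ RS ∈ lowerDraws k r t s, lowerKernel k r n u t s RS * g (lowerNext k r s RS) :=
  tsum_eq_sum fun RS h => by
    rw [← lowerKernel, lowerKernel_eq_zero_of_notMem h, zero_mul]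

lemma lowerKernel_nonneg (hr : 1 ≤ r) (hrk : r ≤ k) (hn : u + t + k ≤ n)
    (RS : (Fin (r - 1) → ℕ) × ℕ) : 0 ≤ lowerKernel k r n u t s RS := by
  have hN : (k : ℝ) ≤ (n : ℝ) - u - t := by
    have : (u : ℝ) + t + k ≤ n := mod_cast hn
    linarith
  have hN₀ : 0 ≤ (n : ℝ) - u - t := (Nat.cast_nonneg k).trans hN
  have hr' : (1 : ℝ) ≤ r := mod_cast hr
  refine mul_nonneg (prod_nonneg fun i _ => binomPMF_nonneg ?_ ?_ _ _) (binomPMF_nonneg ?_ ?_ _ _)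
  · exact div_nonneg (Nat.cast_nonneg _) hN₀
  · refine div_le_one_of_le₀ (le_trans ?_ hN) hN₀
    exact mod_cast (by lia : k - r + 2 + (i : ℕ) ≤ k)
  · exact one_div_nonneg.2 (by linarith)
  · exact div_le_one_of_le₀ (by linarith) (by linarith)

lemma lowerStep_mono (hr : 1 ≤ r) (hrk : r ≤ k) (hn : u + t + k ≤ n) (hg : ∀ s, g s ≤ g' s) :
    lowerStep k r n u t g s ≤ lowerStep k r n u t g' s := by
  rw [lowerStep_eq_sum, lowerStep_eq_sum]
  exact sum_le_sum fun RS _ =>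
    mul_le_mul_of_nonneg_left (hg _) (lowerKernel_nonneg hr hrk hn RS)

lemma lowerStep_const_mul (c : ℝ) :
    lowerStep k r n u t (fun s => c * g s) s = c * lowerStep k r n u t g s := by
  simp only [lowerStep_eq_sum, mul_sum, mul_left_comm]

lemma lowerIter_mono (hr : 1 ≤ r) (hrk : r ≤ k) (hg : ∀ s, g s ≤ g' s)
    (hn : u + t + τ + k ≤ n) : lowerIter k r n u t τ g s ≤ lowerIter k r n u t τ g' s := by
  induction τ generalizing t s with
  | zero => exact hg s
  | succ τ ih => exact lowerStep_mono hr hrk (by lia) fun s => ih (by lia)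

lemma lowerIter_const_mul (c : ℝ) :
    lowerIter k r n u t τ (fun s => c * g s) = fun s => c * lowerIter k r n u t τ g s := by
  induction τ generalizing t with
  | zero => rfl
  | succ τ ih =>
    funext s
    simp only [lowerIter, ih, lowerStep_const_mul]

lemma stateWeight_congr (hr : 1 ≤ r) (hrk : r ≤ k)
    (h : ∀ j, k - r + 2 ≤ j → j ≤ k → y j = y' j) :
    stateWeight k r y s = stateWeight k r y' s :=
  prod_congr rfl fun i _ => by rw [h _ (by lia) (by lia)]

lemma Rext_add_val (R : Fin (r - 1) → ℕ) (i : Fin (r - 1)) :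
    Rext k r R (k - r + 2 + i) = R i := by
  simp [Rext]

/-- A constraint losing one of its `j` unknown variables trades its factor `y j` for `y (j - 1)`,
so the factors line up after a shift of the index; the boundary factor `y (k - r + 1)` of the
constraints leaving the tracked range is `1`. -/
lemma stateWeight_lowerNext (hr : 2 ≤ r) (hrk : r ≤ k) (hy : y (k - r + 1) = 1)
    (RS : (Fin (r - 1) → ℕ) × ℕ) :
    stateWeight k r y (lowerNext k r s RS)
      = ∏ i : Fin (r - 1), (y (k - r + 2 + (i : ℕ)) ^ (s.2 (k - r + 2 + (i : ℕ)) - RS.1 i)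
          * y (k - r + 2 + (i : ℕ) - 1) ^ RS.1 i) := by
  obtain ⟨w, rfl⟩ := Nat.exists_eq_add_of_le' hr
  have shift : ∏ i : Fin (w + 1), y (k - (w + 2) + 2 + i) ^
        Rext k (w + 2) RS.1 (k - (w + 2) + 2 + i + 1)
      = ∏ i : Fin (w + 1), y (k - (w + 2) + 2 + i - 1) ^
        Rext k (w + 2) RS.1 (k - (w + 2) + 2 + i) := by
    have last : Rext k (w + 2) RS.1 (k - (w + 2) + 2 + w + 1) = 0 := dif_neg (by lia)
    rw [Fin.prod_univ_castSucc, Fin.prod_univ_succ]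
    simp only [Fin.val_castSucc, Fin.val_last, last, pow_zero, mul_one, Fin.val_zero, Fin.val_succ,
      Nat.add_zero, Nat.add_sub_cancel, hy, one_pow, one_mul, ← Nat.add_assoc,
      Nat.add_succ_sub_one]
  calc stateWeight k (w + 2) y (lowerNext k (w + 2) s RS)
      = (∏ i : Fin (w + 1), y (k - (w + 2) + 2 + i) ^ (s.2 (k - (w + 2) + 2 + i) - RS.1 i))
          * ∏ i : Fin (w + 1), y (k - (w + 2) + 2 + i) ^
            Rext k (w + 2) RS.1 (k - (w + 2) + 2 + i + 1) := by
        rw [← prod_mul_distrib]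
        refine prod_congr rfl fun i _ => ?_
        simp only [lowerNext]
        rw [if_pos ⟨by lia, by lia⟩, Rext_add_val, pow_add]
    _ = _ := by
        rw [shift, ← prod_mul_distrib]
        exact prod_congr rfl fun i _ => by rw [Rext_add_val]

lemma sum_lowerKernel_snd (R : Fin (r - 1) → ℕ) :
    ∑ S ∈ range ((s.1 + (t : ℤ)).toNat + 1), lowerKernel k r n u t s (R, S)
      = ∏ i : Fin (r - 1), binomPMF (s.2 (k - r + 2 + (i : ℕ)))
          (((k - r + 2 + (i : ℕ) : ℕ) : ℝ) / ((n : ℝ) - u - t)) (R i) := by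
  simp only [lowerKernel, ← mul_sum, sum_binomPMF, mul_one]

/-- The binomial theorem: a step turns each factor `y j` into its mean after one revealed
variable. -/
lemma lowerStep_stateWeight (hr : 2 ≤ r) (hrk : r ≤ k) (hy : y (k - r + 1) = 1) :
    lowerStep k r n u t (stateWeight k r y) s
      = stateWeight k r (fun j => (1 - (j : ℝ) / ((n : ℝ) - u - t)) * y j
          + (j : ℝ) / ((n : ℝ) - u - t) * y (j - 1)) s := by
  simp only [lowerStep_eq_sum, lowerDraws, sum_product, stateWeight_lowerNext hr hrk hy,
    ← sum_mul, sum_lowerKernel_snd, ← prod_mul_distrib]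
  rw [← prod_univ_sum (fun i : Fin (r - 1) => range (s.2 (k - r + 2 + (i : ℕ)) + 1))
    (fun i x => binomPMF (s.2 (k - r + 2 + (i : ℕ)))
        (((k - r + 2 + (i : ℕ) : ℕ) : ℝ) / ((n : ℝ) - u - t)) x *
      (y (k - r + 2 + (i : ℕ)) ^ (s.2 (k - r + 2 + (i : ℕ)) - x)
        * y (k - r + 2 + (i : ℕ) - 1) ^ x))]
  exact prod_congr rfl fun i _ => sum_binomPMF_mul_pow_mul_pow _ _ _ _

end LowerChain

section HitWeight

/-- The generating function `E[z ^ 1{X = d}]` of the event that `j` uniformly chosen elements out of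
`M + τ` meet a fixed set of `M` elements exactly `d` times. -/
def hitWeight (z : ℝ) (M τ d j : ℕ) : ℝ :=
  1 + (z - 1) * hypergeomProb M τ d j

lemma hitWeight_eq_one_of_lt {d j : ℕ} (h : j < d) (z : ℝ) (M τ : ℕ) : hitWeight z M τ d j = 1 := by
  rw [hitWeight, hypergeomProb_eq_zero_of_lt h, mul_zero, add_zero]

lemma hitWeight_succ {M τ j : ℕ} (z : ℝ) (d : ℕ) (hj : j ≤ M + τ) :
    hitWeight z M (τ + 1) d j
      = (1 - (j : ℝ) / (M + τ + 1 : ℕ)) * hitWeight z M τ d j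
        + (j : ℝ) / (M + τ + 1 : ℕ) * hitWeight z M τ d (j - 1) := by
  rw [hitWeight, hypergeomProb_succ d hj, hitWeight, hitWeight]
  ring

end HitWeight

section GeneratingFunction

variable {k r n u t τ M m : ℕ} {z : ℝ}

lemma pow_eq_stateWeight_hitWeight (hr : 2 ≤ r) (hrk : r ≤ k) (hkM : k ≤ M)
    (s : ℤ × (ℕ → ℕ)) :
    z ^ s.2 (k - r + 2) = stateWeight k r (hitWeight z M 0 (k - r + 2)) s := by
  rw [stateWeight, Fintype.prod_eq_single ⟨0, by lia⟩]
  · simp [hitWeight, hypergeomProb_zero_self (show k - r + 2 ≤ M by lia)]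
  · intro i hi
    have hi : (i : ℕ) ≠ 0 := fun h => hi (Fin.ext h)
    rw [hitWeight, hypergeomProb_zero_of_ne (by lia), mul_zero, add_zero, one_pow]

lemma lowerIter_stateWeight_hitWeight (hr : 2 ≤ r) (hrk : r ≤ k) (hkM : k ≤ M)
    (hn : u + t + τ + M = n) :
    lowerIter k r n u t τ (stateWeight k r (hitWeight z M 0 (k - r + 2)))
      = stateWeight k r (hitWeight z M τ (k - r + 2)) := by
  induction τ generalizing t with
  | zero => rfl
  | succ τ ih =>
    have hN : (n : ℝ) - u - t = (M + τ + 1 : ℕ) := by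
      rw [← hn]
      push_cast
      ring
    funext s
    rw [lowerIter, ih (by lia),
      lowerStep_stateWeight hr hrk (hitWeight_eq_one_of_lt (by lia) _ _ _), hN]
    exact stateWeight_congr (by lia) hrk fun j _ hj => (hitWeight_succ z _ (by lia)).symm

/-- The number of variables of a constraint with tuple `e` that are unknown, that is, not among the
first `u`. -/
def unknownDegree (u : ℕ) (e : Fin k ↪ Fin n) : ℕ :=
  #{i ∈ univ.image e | u ≤ i.val}

lemma unknownDegree_le (u : ℕ) (e : Fin k ↪ Fin n) : unknownDegree u e ≤ k := by
  rw [unknownDegree]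
  exact (card_filter_le _ _).trans (card_image_le.trans_eq (card_fin k))

lemma stateWeight_initState {y : ℕ → ℝ} (hr : 1 ≤ r) (hrk : r ≤ k)
    (hy : ∀ j < k - r + 2, y j = 1) (ω : Fin m → (Fin k ↪ Fin n)) :
    stateWeight k r y (initState n m k r u ω) = ∏ a, y (unknownDegree u (ω a)) := by
  have maps_to : ∀ a ∈ univ, unknownDegree u (ω a) ∈ range (k - r + 2 + (r - 1)) := fun a _ =>
    mem_range.2 (by have := unknownDegree_le u (ω a); lia)
  rw [← prod_fiberwise_of_maps_to' maps_to y, prod_range_add, prod_eq_one, one_mul,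
    ← Fin.prod_univ_eq_prod_range]
  · refine prod_congr rfl fun i _ => ?_
    rw [prod_const]
    rfl
  · exact fun j hj => prod_eq_one fun _ _ => hy j (mem_range.1 hj)

lemma sum_hypergeomProb_unknownDegree (u τ d : ℕ) (hkM : k ≤ M) :
    ∑ e : Fin k ↪ Fin (u + τ + M), hypergeomProb M τ d (unknownDegree u e)
      = Fintype.card (Fin k ↪ Fin (u + τ + M)) * hypergeomProb M (u + τ) d k := by
  have fiber_card : ∀ j, #{e : Fin k ↪ Fin (u + τ + M) | unknownDegree u e = j}
      = hypergeomCount (M + τ) u j k * k.factorial := fun j => by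
    have known : #{i : Fin (u + τ + M) | ¬u ≤ i.val} = u := by
      simp only [not_le, Fin.card_filter_val_lt]
      lia
    have unknown := card_filter_add_card_filter_not (s := univ)
      fun i : Fin (u + τ + M) => u ≤ i.val
    rw [known, card_univ, Fintype.card_fin] at unknown
    have := card_embedding_filter_image (ι := Fin k) (fun i : Fin (u + τ + M) => u ≤ i.val) j
    rwa [known, show #{i : Fin (u + τ + M) | u ≤ i.val} = M + τ by lia, Fintype.card_fin] at this
  have hpos : ((M + (u + τ)).choose k : ℝ) ≠ 0 := mod_cast (Nat.choose_pos (by lia)).ne'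
  have maps_to : ∀ e ∈ univ, unknownDegree u (e : Fin k ↪ Fin (u + τ + M)) ∈ range (k + 1) :=
    fun e _ => mem_range.2 (Nat.lt_succ_of_le (unknownDegree_le u e))
  calc ∑ e : Fin k ↪ Fin (u + τ + M), hypergeomProb M τ d (unknownDegree u e)
      = (∑ j ∈ range (k + 1), (hypergeomCount (M + τ) u j k : ℝ) * hypergeomProb M τ d j)
          * k.factorial := by
        rw [← sum_fiberwise_of_maps_to' maps_to, sum_mul]
        refine sum_congr rfl fun j _ => ?_
        rw [sum_const, fiber_card, nsmul_eq_mul]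
        push_cast
        ring
    _ = Fintype.card (Fin k ↪ Fin (u + τ + M)) * hypergeomProb M (u + τ) d k := by
        rw [sum_hypergeomCount_mul_hypergeomProb (by lia), hypergeomProb, Fintype.card_embedding_eq,
          Fintype.card_fin, Fintype.card_fin, Nat.descFactorial_eq_factorial_mul_choose,
          Nat.add_comm (u + τ) M]
        push_cast
        field_simp

/-- The tracked coordinate is binomial: each constraint independently ends up with exactly
`k - r + 2` unknown variables with the same probability. -/
lemma lowerE_pow (hr : 2 ≤ r) (hrk : r ≤ k) (hkM : k ≤ M) :
    lowerE k r (u + τ + M) u m τ (fun s => z ^ s.2 (k - r + 2))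
      = (1 + (z - 1) * hypergeomProb M (u + τ) (k - r + 2) k) ^ m := by
  have sum_hitWeight : ∑ e : Fin k ↪ Fin (u + τ + M),
      hitWeight z M τ (k - r + 2) (unknownDegree u e)
        = Fintype.card (Fin k ↪ Fin (u + τ + M))
          * (1 + (z - 1) * hypergeomProb M (u + τ) (k - r + 2) k) := by
    simp only [hitWeight, sum_add_distrib, ← mul_sum, sum_hypergeomProb_unknownDegree u τ _ hkM,
      sum_const, card_univ, nsmul_one]
    ring
  have : Nonempty (Fin k ↪ Fin (u + τ + M)) := ⟨Fin.castLEEmb (by lia)⟩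
  have hcard : (Fintype.card (Fin k ↪ Fin (u + τ + M)) : ℝ) ≠ 0 :=
    mod_cast Fintype.card_ne_zero
  simp only [lowerE, pow_eq_stateWeight_hitWeight hr hrk hkM,
    lowerIter_stateWeight_hitWeight hr hrk hkM (n := u + τ + M) (t := 0) rfl,
    stateWeight_initState (show 1 ≤ r by lia) hrk fun j hj => hitWeight_eq_one_of_lt hj z M τ]
  rw [← Fintype.sum_pow fun e => hitWeight z M τ (k - r + 2) (unknownDegree u e), sum_hitWeight,
    Fintype.card_fun, Fintype.card_fin, Nat.cast_pow, mul_pow,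
    mul_div_cancel_left₀ _ (pow_ne_zero m hcard)]

end GeneratingFunction

section Chernoff

variable {k r n u τ m : ℕ}

lemma lowerE_mono {g g' : ℤ × (ℕ → ℕ) → ℝ} (hr : 1 ≤ r) (hrk : r ≤ k) (hn : u + τ + k ≤ n)
    (hg : ∀ s, g s ≤ g' s) : lowerE k r n u m τ g ≤ lowerE k r n u m τ g' :=
  div_le_div_of_nonneg_right (sum_le_sum fun _ _ => lowerIter_mono hr hrk hg hn)
    (Nat.cast_nonneg _)

lemma lowerE_const_mul (g : ℤ × (ℕ → ℕ) → ℝ) (c : ℝ) :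
    lowerE k r n u m τ (fun s => c * g s) = c * lowerE k r n u m τ g := by
  simp only [lowerE, lowerIter_const_mul, ← mul_sum, mul_div_assoc]

lemma ite_le_one_zero_le_exp_mul_pow {a b : ℝ} (hb : 0 < b) (hab : b ≤ a) (i : ℕ) :
    (if (i : ℝ) ≤ b then 1 else 0) ≤ Real.exp (b * Real.log (a / b)) * (b / a) ^ i := by
  have ha : 0 < a := hb.trans_le hab
  split_ifs with hi
  · have hlog : 0 ≤ Real.log (a / b) := Real.log_nonneg ((one_le_div hb).2 hab)
    have hpow : (b / a) ^ i = Real.exp (-(i * Real.log (a / b))) := by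
      rw [← mul_neg, ← Real.log_inv, inv_div, Real.exp_nat_mul, Real.exp_log (by positivity)]
    rw [hpow, ← Real.exp_add, Real.one_le_exp_iff]
    linarith [mul_le_mul_of_nonneg_right hi hlog]
  · positivity

/-- Chernoff's method, with the optimal `z = b / a` in the generating function. -/
lemma lowerE_ite_le_le_exp {a b : ℝ} (hr : 2 ≤ r) (hrk : r ≤ k) (hn : u + τ + k ≤ n)
    (hb : 0 < b) (hab : b ≤ a)
    (ha : a ≤ hypergeomProb (n - (u + τ)) (u + τ) (k - r + 2) k * m) :
    lowerE k r n u m τ (fun s => if (s.2 (k - r + 2) : ℝ) ≤ b then 1 else 0)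
      ≤ Real.exp (-(a - b - b * Real.log (a / b))) := by
  obtain ⟨M, rfl⟩ := Nat.exists_eq_add_of_le (Nat.le_of_add_right_le hn)
  rw [Nat.add_sub_cancel_left] at ha
  set p := hypergeomProb M (u + τ) (k - r + 2) k
  have ha₀ : 0 < a := hb.trans_le hab
  have hz : b / a - 1 ≤ 0 := sub_nonpos.2 ((div_le_one ha₀).2 hab)
  have hbase : 0 ≤ 1 + (b / a - 1) * p := by
    have hz₀ : 0 < b / a := div_pos hb ha₀
    nlinarith [hypergeomProb_nonneg M (u + τ) (k - r + 2) k,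
      hypergeomProb_le_one M (u + τ) (k - r + 2) k]
  calc lowerE k r (u + τ + M) u m τ (fun s => if (s.2 (k - r + 2) : ℝ) ≤ b then 1 else 0)
      ≤ Real.exp (b * Real.log (a / b)) * (1 + (b / a - 1) * p) ^ m := by
        rw [← lowerE_pow hr hrk (Nat.le_of_add_le_add_left hn), ← lowerE_const_mul]
        exact lowerE_mono (by lia) hrk hn fun s => ite_le_one_zero_le_exp_mul_pow hb hab _
    _ ≤ Real.exp (b * Real.log (a / b)) * Real.exp ((b / a - 1) * p) ^ m := by
        gcongr
        linarith [Real.add_one_le_exp ((b / a - 1) * p)]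
    _ = Real.exp (b * Real.log (a / b) + (b / a - 1) * (p * m)) := by
        rw [← Real.exp_nat_mul, ← Real.exp_add]
        ring_nf
    _ ≤ Real.exp (b * Real.log (a / b) + (b / a - 1) * a) :=
        Real.exp_le_exp.2 (add_le_add_right (mul_le_mul_of_nonpos_left ha hz) _)
    _ = Real.exp (-(a - b - b * Real.log (a / b))) := by
        rw [sub_mul, div_mul_cancel₀ b ha₀.ne']
        ring_nf

end Chernoff

section Asymptotics

lemma tendsto_choose_div_pow {α : Type*} {l : Filter α} {f : α → ℕ} {g : α → ℝ} {a : ℝ}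
    (hf : Tendsto f l atTop) (hfg : Tendsto (fun x => (f x : ℝ) / g x) l (nhds a)) (i : ℕ) :
    Tendsto (fun x => ((f x).choose i : ℝ) / g x ^ i) l (nhds (a ^ i / i.factorial)) := by
  have equiv : (fun x => ((f x).choose i : ℝ) / g x ^ i)
      ~[l] fun x => (f x : ℝ) ^ i / i.factorial / g x ^ i :=
    ((isEquivalent_choose i).comp_tendsto hf).div .refl
  refine equiv.symm.tendsto_nhds (((hfg.pow i).div_const _).congr fun x => ?_)
  rw [div_pow, div_right_comm]

lemma eventually_add_le_of_tendsto_div {f : ℕ → ℕ}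
    (hf : Tendsto (fun n => (f n : ℝ) / n) atTop (nhds 0)) (k : ℕ) :
    ∀ᶠ n in atTop, f n + k ≤ n := by
  have hk : Tendsto (fun n : ℕ => (k : ℝ) / n) atTop (nhds 0) :=
    tendsto_const_div_atTop_nhds_zero_nat _
  filter_upwards [(hf.add hk).eventually_lt_const (u := 1) (by norm_num), eventually_gt_atTop 0]
    with n hn hn₀
  rw [← add_div, div_lt_one (mod_cast hn₀)] at hn
  exact mod_cast hn.le

lemma tendsto_natCast_sub_div {f : ℕ → ℕ}
    (hf : Tendsto (fun n => (f n : ℝ) / n) atTop (nhds 0)) :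
    Tendsto (fun n => ((n - f n : ℕ) : ℝ) / n) atTop (nhds 1) := by
  rw [← sub_zero 1]
  refine (hf.const_sub 1).congr' ?_
  filter_upwards [eventually_add_le_of_tendsto_div hf 0, eventually_gt_atTop 0] with n hn hn₀
  rw [Nat.cast_sub (by lia), sub_div, div_self (mod_cast hn₀.ne')]

lemma tendsto_hypergeomProb {f : ℕ → ℕ} {g : ℕ → ℝ} {a : ℝ} (hf : Tendsto f atTop atTop)
    (hfn : Tendsto (fun n => (f n : ℝ) / n) atTop (nhds 0))
    (hfg : Tendsto (fun n => (f n : ℝ) / g n) atTop (nhds a)) (d w : ℕ) :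
    Tendsto (fun n : ℕ => ((n : ℝ) / g n) ^ w * hypergeomProb (n - f n) (f n) d (d + w)) atTop
      (nhds ((d + w).choose w * a ^ w)) := by
  have hself : Tendsto (fun n : ℕ => (n : ℝ) / n) atTop (nhds 1) := by
    simpa using tendsto_natCast_sub_div (f := fun _ => 0) (by simp)
  have hcompl_atTop : Tendsto (fun n => n - f n) atTop atTop :=
    tendsto_atTop.2 fun i => (eventually_add_le_of_tendsto_div hfn i).mono fun n hn => by lia
  have hlim := ((tendsto_choose_div_pow hcompl_atTop (tendsto_natCast_sub_div hfn) d).mul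
    (tendsto_choose_div_pow hf hfg w)).div (tendsto_choose_div_pow tendsto_id hself (d + w))
    (by positivity)
  have hval : (1 : ℝ) ^ d / d.factorial * (a ^ w / w.factorial) / (1 ^ (d + w) / (d + w).factorial)
      = (d + w).choose w * a ^ w := by
    rw [Nat.add_comm d w, Nat.cast_add_choose]
    simp only [one_pow]
    field_simp
  rw [hval] at hlim
  refine hlim.congr' ?_
  filter_upwards [eventually_add_le_of_tendsto_div hfn 0, eventually_gt_atTop 0] with n hn hn₀
  have hn' : n - f n + f n = n := Nat.sub_add_cancel hn
  simp only [Pi.div_apply, hypergeomProb, hypergeomCount_add, hn', id, div_pow, pow_add]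
  push_cast
  field_simp

lemma eventually_mul_le_hypergeomProb_add_mul {f m : ℕ → ℕ} {g : ℕ → ℝ} {a c μ : ℝ} {d w : ℕ}
    (hf : Tendsto f atTop atTop) (hfn : Tendsto (fun n => (f n : ℝ) / n) atTop (nhds 0))
    (hfg : Tendsto (fun n => (f n : ℝ) / g n) atTop (nhds a))
    (hm : ∀ n : ℕ, μ * (n : ℝ) ^ (w + 1) / g n ^ w ≤ m n)
    (hc : c < μ * ((d + w).choose w * a ^ w)) :
    ∀ᶠ n in atTop, c * n ≤ hypergeomProb (n - f n) (f n) d (d + w) * m n := by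
  filter_upwards [((tendsto_hypergeomProb hf hfn hfg d w).const_mul μ).eventually_const_lt hc]
    with n hn
  calc c * n ≤ μ * ((n / g n) ^ w * hypergeomProb (n - f n) (f n) d (d + w)) * n := by gcongr
    _ = hypergeomProb (n - f n) (f n) d (d + w) * (μ * (n : ℝ) ^ (w + 1) / g n ^ w) := by
        rw [div_pow]
        ring
    _ ≤ hypergeomProb (n - f n) (f n) d (d + w) * m n :=
        mul_le_mul_of_nonneg_left (hm n) (hypergeomProb_nonneg _ _ _ _)

lemma tendsto_add_div_div_self {α : Type*} {l : Filter α} {u : α → ℕ}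
    (hu : Tendsto (fun x => (u x : ℝ)) l atTop) (w : ℕ) :
    Tendsto (fun x => ((u x + u x / w : ℕ) : ℝ) / u x) l (nhds (1 + 1 / w)) := by
  have hfloor := ((tendsto_nat_floor_mul_div_atTop (R := ℝ) (a := 1 / w) (by positivity)).comp
    hu).const_add 1
  refine hfloor.congr' ?_
  filter_upwards [hu.eventually_gt_atTop 0] with x hx
  simp only [Function.comp_apply]
  rw [one_div_mul_eq_div, Nat.floor_div_eq_div, Nat.cast_add, add_div, div_self hx.ne']

lemma UGood.tendsto_add_div_div {u : ℕ → ℕ} (hu : UGood u) (w : ℕ) :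
    Tendsto (fun n => ((u n + u n / w : ℕ) : ℝ) / n) atTop (nhds 0) := by
  rw [← mul_zero (1 + 1 / (w : ℝ))]
  refine ((tendsto_add_div_div_self hu.1 w).mul hu.2).congr' ?_
  filter_upwards [hu.1.eventually_gt_atTop 0] with n hn
  exact div_mul_div_cancel₀ hn.ne'

lemma UGood.tendsto_add_div {u : ℕ → ℕ} (hu : UGood u) (w : ℕ) :
    Tendsto (fun n => u n + u n / w) atTop atTop :=
  tendsto_atTop_mono (fun _ => Nat.le_add_right _ _) (tendsto_natCast_atTop_iff.1 hu.1)

lemma UGood.eventually_mul_le_hypergeomProb_mul {u m : ℕ → ℕ} {k r : ℕ} {μ c : ℝ} (hu : UGood u)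
    (hr : 2 ≤ r) (hrk : r ≤ k)
    (hm : ∀ n : ℕ, μ * (n : ℝ) ^ (r - 1) / (u n : ℝ) ^ (r - 2) ≤ m n)
    (hc : c < μ * (k.choose (r - 2) * (1 + 1 / (r - 2 : ℕ)) ^ (r - 2))) :
    ∀ᶠ n in atTop, c * n ≤
      hypergeomProb (n - (u n + u n / (r - 2))) (u n + u n / (r - 2)) (k - r + 2) k * m n := by
  obtain ⟨w, rfl⟩ := Nat.exists_eq_add_of_le' hr
  obtain ⟨e, rfl⟩ := Nat.exists_eq_add_of_le hrk
  have hk : w + 2 + e - (w + 2) + 2 + w = w + 2 + e := by lia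
  have mean := eventually_mul_le_hypergeomProb_add_mul (d := w + 2 + e - (w + 2) + 2) (w := w)
    (hu.tendsto_add_div w) (hu.tendsto_add_div_div w) (tendsto_add_div_div_self hu.1 w) hm
    (by rwa [hk])
  rwa [hk] at mean

end Asymptotics

section Threshold

lemma choose_mul_add_two_mul_add_one (w e : ℕ) :
    (w + 2 + e).choose w * ((e + 2) * (e + 1))
      = (w + 2 + e).choose (w + 2) * ((w + 2) * (w + 1)) := by
  have h₁ := Nat.choose_succ_right_eq (w + 2 + e) w
  have h₂ := Nat.choose_succ_right_eq (w + 2 + e) (w + 1)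
  rw [show w + 2 + e - w = e + 2 by lia] at h₁
  rw [show w + 2 + e - (w + 1) = e + 1 by lia] at h₂
  rw [← mul_assoc, ← h₁, mul_right_comm, ← h₂]
  ring

lemma muc_mul_choose_mul_pow {k r : ℕ} (hr : 3 ≤ r) (hrk : r ≤ k) :
    muc k r * (k.choose (r - 2) * (1 + 1 / (r - 2 : ℕ)) ^ (r - 2))
      = 1 / (((k : ℝ) - r + 2) * ((k : ℝ) - r + 1)) := by
  obtain ⟨w, rfl⟩ := Nat.exists_eq_add_of_le' (show 2 ≤ r by lia)
  obtain ⟨e, rfl⟩ := Nat.exists_eq_add_of_le hrk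
  have hw : (w : ℝ) ≠ 0 := mod_cast (show w ≠ 0 by lia)
  have hw₁ : (w : ℝ) + 1 ≠ 0 := by positivity
  have hchoose₀ : ((w + 2 + e).choose (w + 2) : ℝ) ≠ 0 := mod_cast (Nat.choose_pos hrk).ne'
  have hchoose : ((w + 2 + e).choose w : ℝ) * ((e + 2) * (e + 1))
      = (w + 2 + e).choose (w + 2) * ((w + 2) * (w + 1)) :=
    mod_cast choose_mul_add_two_mul_add_one w e
  have hbase : (1 : ℝ) + 1 / w = (w + 1) / w := by field_simp
  simp only [muc, Nat.add_sub_cancel, Nat.add_succ_sub_one]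
  push_cast
  rw [hbase, div_pow, pow_succ, show (w : ℝ) + 2 - 2 = w by ring,
    show (w : ℝ) + 2 - 1 = w + 1 by ring, show (w : ℝ) + 2 + e - (w + 2) = e by ring]
  field_simp
  linear_combination hchoose

lemma one_div_lt_mul_of_muc_lt {k r : ℕ} {μ : ℝ} (hr : 3 ≤ r) (hrk : r ≤ k) (hμ : muc k r < μ) :
    1 / (((k : ℝ) - r + 2) * ((k : ℝ) - r + 1))
      < μ * (k.choose (r - 2) * (1 + 1 / (r - 2 : ℕ)) ^ (r - 2)) := by
  have hchoose : 0 < k.choose (r - 2) := Nat.choose_pos (by lia)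
  rw [← muc_mul_choose_mul_pow hr hrk]
  exact mul_lt_mul_of_pos_right hμ (by positivity)

lemma mul_log_div_lt_sub {a b : ℝ} (hb : 0 < b) (hab : b < a) :
    b * Real.log (a / b) < a - b := by
  have hlog := Real.log_lt_sub_one_of_pos (div_pos (hb.trans hab) hb) ((one_lt_div hb).2 hab).ne'
  calc b * Real.log (a / b) < b * (a / b - 1) := mul_lt_mul_of_pos_left hlog hb
    _ = a - b := by rw [mul_sub, mul_div_cancel₀ a hb.ne', mul_one]

end Threshold

/-- for the lower-bound Markov chain with `μ > μ_c(k,r)` and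
`m = ⌈μ n^{r-1}/u(n)^{r-2}⌉`, for all sufficiently small `ε > 0` there is `δ > 0` with
`Pr(C̲_{k-r+2}(⌊u(n)/(r-2)⌋) ≤ (1/((k-r+2)(k-r+1)) + ε) n) ≤ exp(-δn)` for large `n`. -/
theorem stmt15 (k r : ℕ) (hr : 3 ≤ r) (hrk : r ≤ k)
    (u : ℕ → ℕ) (hu : UGood u)
    (μ : ℝ) (hμ : muc k r < μ)
    (m : ℕ → ℕ) (hm : ∀ n, m n = ⌈μ * (n : ℝ) ^ (r - 1) / (u n : ℝ) ^ (r - 2)⌉₊) :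
    ∃ ε₀ > (0 : ℝ), ∀ ε ∈ Set.Ioo (0 : ℝ) ε₀, ∃ δ > (0 : ℝ), ∀ᶠ n in atTop,
      lowerE k r n (u n) (m n) (u n / (r - 2))
          (fun st : ℤ × (ℕ → ℕ) =>
            if (st.2 (k - r + 2) : ℝ)
                ≤ (1 / (((k : ℝ) - r + 2) * ((k : ℝ) - r + 1)) + ε) * n then 1 else 0)
        ≤ Real.exp (-δ * n) := by
  have hc₀ : (0 : ℝ) < 1 / (((k : ℝ) - r + 2) * ((k : ℝ) - r + 1)) := by
    have : (0 : ℝ) ≤ k - r := sub_nonneg.2 (mod_cast hrk)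
    positivity
  have threshold := one_div_lt_mul_of_muc_lt hr hrk hμ
  set c₀ : ℝ := 1 / (((k : ℝ) - r + 2) * ((k : ℝ) - r + 1))
  refine ⟨_, sub_pos.2 threshold, fun ε ⟨hε, hεc₀⟩ => ?_⟩
  obtain ⟨c, hεc, hc⟩ := exists_between (lt_sub_iff_add_lt'.1 hεc₀)
  have hc₀ε : 0 < c₀ + ε := add_pos hc₀ hε
  refine ⟨c - (c₀ + ε) - (c₀ + ε) * Real.log (c / (c₀ + ε)),
    sub_pos.2 (mul_log_div_lt_sub hc₀ε hεc), ?_⟩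
  have mean := hu.eventually_mul_le_hypergeomProb_mul (by lia) hrk
    (fun n => (Nat.le_ceil _).trans_eq (congrArg _ (hm n).symm)) hc
  have room := eventually_add_le_of_tendsto_div (hu.tendsto_add_div_div (r - 2)) k
  filter_upwards [mean, room, eventually_gt_atTop 0] with n mean_le hn hn₀
  have hn₀ : (0 : ℝ) < n := mod_cast hn₀
  refine (lowerE_ite_le_le_exp (by lia) hrk hn (mul_pos hc₀ε hn₀) (by gcongr)
    mean_le).trans_eq ?_
  rw [mul_div_mul_right _ _ hn₀.ne']
  ring_nf
end
end
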